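/- arXiv:1605.00818 — 2 statements merged into one kernel-verified Lean document; each statement's English description precedes it below -/
import Mathlib

section
/- For every integer k ≥ 9 with k ≡ 1 (mod 4), there exists a k-ARCS(6k+1), i.e. an almost resolvable k-cycle system of order 6k+1. -/
open SimpleGraph

/-- `F` is a `C_k`-factor of `H`: a spanning subgraph of `H` that is 2-regular
and each of whose connected components has exactly `k` vertices. -/
def IsCycleFactor {V : Type*} (H F : SimpleGraph V) (k : ℕ) : Prop :=
  F ≤ H ∧ (∀ v, (F.neighborSet v).ncard = 2) ∧
    ∀ v : V, {w | F.Reachable v w}.ncard = k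

/-- The family of graphs `F` partitions the edge set of `H`. -/
def IsDecomp {V ι : Type*} (H : SimpleGraph V) (F : ι → SimpleGraph V) : Prop :=
  (Pairwise fun i j => Disjoint (F i).edgeSet (F j).edgeSet) ∧
  ∀ e, e ∈ H.edgeSet ↔ ∃ i, e ∈ (F i).edgeSet

/-- `HW H m n α β`: the edge set of `H` can be partitioned into
`α` `C_m`-factors and `β` `C_n`-factors. -/
def HW {V : Type*} (H : SimpleGraph V) (m n α β : ℕ) : Prop :=
  ∃ F : Fin α ⊕ Fin β → SimpleGraph V,
    (∀ i, IsCycleFactor H (F (Sum.inl i)) m) ∧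
    (∀ j, IsCycleFactor H (F (Sum.inr j)) n) ∧
    IsDecomp H F

/-- `(α, β) ∈ HWP(v; m, n)` for odd `v`: `K_v` has a 2-factorization into
`α` `C_m`-factors and `β` `C_n`-factors. -/
def HWPodd (v m n α β : ℕ) : Prop := HW (⊤ : SimpleGraph (Fin v)) m n α β

/-- `F ≤ H` is a vertex-disjoint union of `c` cycles of length `k`:
2-regular on its support, every component has `k` vertices, and the support
has `k * c` vertices. -/
def IsCycleClass {V : Type*} (H F : SimpleGraph V) (k c : ℕ) : Prop :=
  F ≤ H ∧ (∀ v ∈ F.support, (F.neighborSet v).ncard = 2) ∧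
  (∀ v ∈ F.support, {w | F.Reachable v w}.ncard = k) ∧
  F.support.ncard = k * c

/-- An almost resolvable `k`-cycle system of order `v`: a partition of the
edges of `K_v` into `(v-1)/2` almost parallel classes (each a vertex-disjoint
union of `(v-1)/k` `k`-cycles) together with one half-parallel class
(a vertex-disjoint union of `(v-1)/(2k)` `k`-cycles). -/
def IsARCS (k v : ℕ) : Prop :=
  ∃ F : Fin ((v - 1) / 2) ⊕ Unit → SimpleGraph (Fin v),
    (∀ i, IsCycleClass ⊤ (F (Sum.inl i)) k ((v - 1) / k)) ∧
    (∀ j, IsCycleClass ⊤ (F (Sum.inr j)) k ((v - 1) / (2 * k))) ∧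
    IsDecomp (⊤ : SimpleGraph (Fin v)) F

/-- The lexicographic product `C_m[n]` of the cycle `C_m` with the empty graph
on `n` vertices, on vertex set `ZMod m × ZMod n`. -/
def lexCycle (m n : ℕ) : SimpleGraph (ZMod m × ZMod n) :=
  SimpleGraph.fromRel (fun a b => a.1 - b.1 = 1)

/-- The Cayley graph of an additive group with connection set `S`. -/
def cayley {Γ : Type*} [AddGroup Γ] (S : Set Γ) : SimpleGraph Γ :=
  SimpleGraph.fromRel (fun a b => a - b ∈ S)

/-- the zigzag `x, y, x+1, y-1, ...` -/
def zz (x y s : ℕ) : ℕ := if s % 2 = 0 then x + s / 2 else y - s / 2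

def s5 (a b c d e i : ℕ) : ℕ :=
  match i with
  | 0 => a
  | 1 => b
  | 2 => c
  | 3 => d
  | _ => e

/-- a closed sequence of length `4L+5`: a zigzag, `p` single vertices, a zigzag, `5-p` vertices -/
def cyc (L x y x' y' p : ℕ) (S : ℕ → ℕ) (t : ℕ) : ℕ :=
  if t < 2 * L then zz x y t
  else if t < 2 * L + p then S (t - 2 * L)
  else if t < 4 * L + p then zz x' y' (t - 2 * L - p)
  else if t < 4 * L + 5 then S (t - 4 * L) else x

/-- the six base cycles -/
def g (L j : ℕ) : ℕ → ℕ :=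
  match j with
  | 0 => cyc L (2 * L + 4) (2 * L) (16 * L + 20) (14 * L + 15) 5 (s5 (24 * L + 30) (14 * L + 17) (18 * L + 22) (7 * L + 9) (14 * L + 16))
  | 1 => cyc L (6 * L + 9) (12 * L + 13) (14 * L + 18) (5 * L + 6) 0 (s5 (17 * L + 20) (23 * L + 29) (4 * L + 5) (0) (21 * L + 25))
  | 2 => cyc L (8 * L + 10) (6 * L + 7) (7 * L + 10) (22 * L + 25) 4 (s5 (16 * L + 19) (9 * L + 11) (3 * L + 4) (20 * L + 24) (23 * L + 28))
  | 3 => cyc L (20 * L + 25) (16 * L + 18) (19 * L + 24) (4 * L + 4) 2 (s5 (2 * L + 3) (2 * L + 2) (9 * L + 10) (5 * L + 7) (22 * L + 26))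
  | 4 => cyc L (23 * L + 30) (13 * L + 14) (18 * L + 23) (L) 0 (s5 (12 * L + 14) (6 * L + 8) (10 * L + 12) (15 * L + 18) (13 * L + 15))
  | _ => cyc L (9 * L + 12) (18 * L + 20) (10 * L + 14) (23 * L + 26) 4 (s5 (4 * L + 6) (19 * L + 23) (23 * L + 27) (2 * L + 1) (18 * L + 21))

section
variable {L x y x' y' p t : ℕ} {S : ℕ → ℕ}

theorem cz1 (h : t < 2 * L := by omega) : cyc L x y x' y' p S t = zz x y t := if_pos h

theorem cz2 (s : ℕ) (ht : t = 2 * L + p + s := by omega) (h : s < 2 * L := by omega) :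
    cyc L x y x' y' p S t = zz x' y' s := by
  subst ht
  unfold cyc
  rw [if_neg (by omega), if_neg (by omega), if_pos (by omega)]
  congr 1
  omega

theorem cs1 (i : ℕ) (ht : t = 2 * L + i := by omega) (h : i < p := by omega) :
    cyc L x y x' y' p S t = S i := by
  subst ht
  unfold cyc
  rw [if_neg (by omega), if_pos (by omega)]
  congr 1
  omega

theorem cs2 (i : ℕ) (ht : t = 4 * L + i := by omega) (h : p ≤ i := by omega)
    (h5 : i < 5 := by omega) : cyc L x y x' y' p S t = S i := by
  subst ht
  unfold cyc
  rw [if_neg (by omega), if_neg (by omega), if_neg (by omega), if_pos (by omega)]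
  congr 1
  omega

theorem ce (ht : t = 4 * L + 5 := by omega) (h : p ≤ 5 := by omega) :
    cyc L x y x' y' p S t = x := by
  subst ht
  unfold cyc
  rw [if_neg (by omega), if_neg (by omega), if_neg (by omega), if_neg (by omega)]

end

/-- `d` is a vertex of one of the base cycles -/
def HasV (L d : ℕ) : Prop := ∃ j, j < 6 ∧ ∃ t, t < 4 * L + 5 ∧ g L j t = d

/-- some (oriented) edge of a base cycle satisfies `P` -/
def HasE (L : ℕ) (P : ℕ → ℕ → Prop) : Prop :=
  ∃ j, j < 6 ∧ ∃ t, t < 4 * L + 5 ∧ P (g L j t) (g L j (t + 1))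

/-- an edge inside level 0, of difference `±d` -/
def P0 (L d a b : ℕ) : Prop :=
  a < 12 * L + 15 ∧ b < 12 * L + 15 ∧
    (b = a + d ∨ a = b + d ∨ b + d = a + (12 * L + 15) ∨ a + d = b + (12 * L + 15))

/-- an edge inside level 1, of difference `±d` -/
def P1 (L d a b : ℕ) : Prop :=
  12 * L + 15 ≤ a ∧ a < 24 * L + 30 ∧ 12 * L + 15 ≤ b ∧ b < 24 * L + 30 ∧
    (b = a + d ∨ a = b + d ∨ b + d = a + (12 * L + 15) ∨ a + d = b + (12 * L + 15))

def Q' (L d a b : ℕ) : Prop :=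
  a < 12 * L + 15 ∧ 12 * L + 15 ≤ b ∧ b < 24 * L + 30 ∧
    (b = a + d + (12 * L + 15) ∨ b = a + d ∨ b + (12 * L + 15) = a + d ∨
      b + (24 * L + 30) = a + d)

/-- an edge between the two levels, of mixed difference `d` -/
def Q (L d a b : ℕ) : Prop := Q' L d a b ∨ Q' L d b a

/-- an edge joining the point at infinity to level 0 -/
def R0 (L a b : ℕ) : Prop :=
  (a < 12 * L + 15 ∧ b = 24 * L + 30) ∨ (b < 12 * L + 15 ∧ a = 24 * L + 30)

/-- an edge joining the point at infinity to level 1 -/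
def R1 (L a b : ℕ) : Prop :=
  (12 * L + 15 ≤ a ∧ a < 24 * L + 30 ∧ b = 24 * L + 30) ∨
    (12 * L + 15 ≤ b ∧ b < 24 * L + 30 ∧ a = 24 * L + 30)

theorem vd {L d a : ℕ} (j t : ℕ) (ha : g L j t = a)
    (h : a = d := by simp only [zz, s5]; (try split_ifs) <;> omega)
    (hj : j < 6 := by omega) (ht : t < 4 * L + 5 := by omega) : HasV L d :=
  ⟨j, hj, t, ht, ha.trans h⟩

theorem ed {L : ℕ} {P : ℕ → ℕ → Prop} {a b : ℕ} (j t : ℕ) (ha : g L j t = a)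
    (hb : g L j (t + 1) = b)
    (h : P a b := by simp only [P0, P1, Q, Q', R0, R1, zz, s5, and_true, true_and, or_true]; (try split_ifs) <;> omega)
    (hj : j < 6 := by omega) (ht : t < 4 * L + 5 := by omega) : HasE L P :=
  ⟨j, hj, t, ht, by rw [ha, hb]; exact h⟩

theorem cov_v (L d : ℕ) (hL : 1 ≤ L) (hd : d < 24 * L + 31) (h0 : d ≠ 10 * L + 13) :
    HasV L d :=
  if h : d < 1 then vd 1 (4 * L + 3) (cs2 3) else
  if h : d < L + 1 then vd 4 (2 * L + 0 + (2 * (L - d) + 1)) (cz2 (2 * (L - d) + 1)) else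
  if h : d < 2 * L + 1 then vd 0 ((2 * (2 * L - d) + 1)) cz1 else
  if h : d < 2 * L + 2 then vd 5 (2 * L + 3) (cs1 3) else
  if h : d < 2 * L + 3 then vd 3 (2 * L + 1) (cs1 1) else
  if h : d < 2 * L + 4 then vd 3 (2 * L + 0) (cs1 0) else
  if h : d < 3 * L + 4 then vd 0 (2 * (d - (2 * L + 4))) cz1 else
  if h : d < 3 * L + 5 then vd 2 (2 * L + 2) (cs1 2) else
  if h : d < 4 * L + 5 then vd 3 (2 * L + 2 + (2 * (4 * L + 4 - d) + 1)) (cz2 (2 * (4 * L + 4 - d) + 1)) else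
  if h : d < 4 * L + 6 then vd 1 (4 * L + 2) (cs2 2) else
  if h : d < 4 * L + 7 then vd 5 (2 * L + 0) (cs1 0) else
  if h : d < 5 * L + 7 then vd 1 (2 * L + 0 + (2 * (5 * L + 6 - d) + 1)) (cz2 (2 * (5 * L + 6 - d) + 1)) else
  if h : d < 5 * L + 8 then vd 3 (4 * L + 3) (cs2 3) else
  if h : d < 6 * L + 8 then vd 2 ((2 * (6 * L + 7 - d) + 1)) cz1 else
  if h : d < 6 * L + 9 then vd 4 (4 * L + 1) (cs2 1) else
  if h : d < 7 * L + 9 then vd 1 (2 * (d - (6 * L + 9))) cz1 else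
  if h : d < 7 * L + 10 then vd 0 (2 * L + 3) (cs1 3) else
  if h : d < 8 * L + 10 then vd 2 (2 * L + 4 + 2 * (d - (7 * L + 10))) (cz2 (2 * (d - (7 * L + 10)))) else
  if h : d < 9 * L + 10 then vd 2 (2 * (d - (8 * L + 10))) cz1 else
  if h : d < 9 * L + 11 then vd 3 (4 * L + 2) (cs2 2) else
  if h : d < 9 * L + 12 then vd 2 (2 * L + 1) (cs1 1) else
  if h : d < 10 * L + 12 then vd 5 (2 * (d - (9 * L + 12))) cz1 else
  if h : d < 10 * L + 13 then vd 4 (4 * L + 2) (cs2 2) else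
  if h : d < 10 * L + 14 then by omega else
  if h : d < 11 * L + 14 then vd 5 (2 * L + 4 + 2 * (d - (10 * L + 14))) (cz2 (2 * (d - (10 * L + 14)))) else
  if h : d < 12 * L + 14 then vd 1 ((2 * (12 * L + 13 - d) + 1)) cz1 else
  if h : d < 12 * L + 15 then vd 4 (4 * L + 0) (cs2 0) else
  if h : d < 13 * L + 15 then vd 4 ((2 * (13 * L + 14 - d) + 1)) cz1 else
  if h : d < 13 * L + 16 then vd 4 (4 * L + 4) (cs2 4) else
  if h : d < 14 * L + 16 then vd 0 (2 * L + 5 + (2 * (14 * L + 15 - d) + 1)) (cz2 (2 * (14 * L + 15 - d) + 1)) else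
  if h : d < 14 * L + 17 then vd 0 (2 * L + 4) (cs1 4) else
  if h : d < 14 * L + 18 then vd 0 (2 * L + 1) (cs1 1) else
  if h : d < 15 * L + 18 then vd 1 (2 * L + 0 + 2 * (d - (14 * L + 18))) (cz2 (2 * (d - (14 * L + 18)))) else
  if h : d < 15 * L + 19 then vd 4 (4 * L + 3) (cs2 3) else
  if h : d < 16 * L + 19 then vd 3 ((2 * (16 * L + 18 - d) + 1)) cz1 else
  if h : d < 16 * L + 20 then vd 2 (2 * L + 0) (cs1 0) else
  if h : d < 17 * L + 20 then vd 0 (2 * L + 5 + 2 * (d - (16 * L + 20))) (cz2 (2 * (d - (16 * L + 20)))) else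
  if h : d < 17 * L + 21 then vd 1 (4 * L + 0) (cs2 0) else
  if h : d < 18 * L + 21 then vd 5 ((2 * (18 * L + 20 - d) + 1)) cz1 else
  if h : d < 18 * L + 22 then vd 5 (4 * L + 4) (cs2 4) else
  if h : d < 18 * L + 23 then vd 0 (2 * L + 2) (cs1 2) else
  if h : d < 19 * L + 23 then vd 4 (2 * L + 0 + 2 * (d - (18 * L + 23))) (cz2 (2 * (d - (18 * L + 23)))) else
  if h : d < 19 * L + 24 then vd 5 (2 * L + 1) (cs1 1) else
  if h : d < 20 * L + 24 then vd 3 (2 * L + 2 + 2 * (d - (19 * L + 24))) (cz2 (2 * (d - (19 * L + 24)))) else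
  if h : d < 20 * L + 25 then vd 2 (2 * L + 3) (cs1 3) else
  if h : d < 21 * L + 25 then vd 3 (2 * (d - (20 * L + 25))) cz1 else
  if h : d < 21 * L + 26 then vd 1 (4 * L + 4) (cs2 4) else
  if h : d < 22 * L + 26 then vd 2 (2 * L + 4 + (2 * (22 * L + 25 - d) + 1)) (cz2 (2 * (22 * L + 25 - d) + 1)) else
  if h : d < 22 * L + 27 then vd 3 (4 * L + 4) (cs2 4) else
  if h : d < 23 * L + 27 then vd 5 (2 * L + 4 + (2 * (23 * L + 26 - d) + 1)) (cz2 (2 * (23 * L + 26 - d) + 1)) else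
  if h : d < 23 * L + 28 then vd 5 (2 * L + 2) (cs1 2) else
  if h : d < 23 * L + 29 then vd 2 (4 * L + 4) (cs2 4) else
  if h : d < 23 * L + 30 then vd 1 (4 * L + 1) (cs2 1) else
  if h : d < 24 * L + 30 then vd 4 (2 * (d - (23 * L + 30))) cz1 else
  vd 0 (2 * L + 0) (cs1 0)

theorem cov0 (L d : ℕ) (hL : 1 ≤ L) (h1 : 1 ≤ d) (hd : d < 6 * L + 8) (h3 : d ≠ 3) :
    HasE L (P0 L d) :=
  if h : d < 2 then ed 3 (2 * L + 0) (cs1 0) (cs1 1) else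
  if h : d < 3 then ed 4 (4 * L - 1) (cz2 (2 * L - 1)) (cs2 0) else
  if h : d < 4 then by omega else
  if h : d < 2 * L + 3 then ed 0 ((d - (4))) cz1 cz1 else
  if h : d < 4 * L + 2 then ed 2 ((d - (2 * L + 3))) cz1 cz1 else
  if h : d < 4 * L + 3 then ed 5 (2 * L + 3) (cs1 3) (cz2 (0)) else
  if h : d < 4 * L + 4 then ed 3 (4 * L + 2) (cs2 2) (cs2 3) else
  if h : d < 4 * L + 5 then ed 4 (4 * L + 1) (cs2 1) (cs2 2) else
  if h : d < 4 * L + 6 then ed 1 (4 * L + 2) (cs2 2) (cs2 3) else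
  if h : d < 6 * L + 5 then ed 1 ((6 * L + 4 - d)) cz1 cz1 else
  if h : d < 6 * L + 6 then ed 3 (4 * L + 1) (cz2 (2 * L - 1)) (cs2 2) else
  if h : d < 6 * L + 7 then ed 4 (4 * L + 0) (cs2 0) (cs2 1) else
  ed 2 (2 * L + 1) (cs1 1) (cs1 2)

theorem cov1 (L d : ℕ) (hL : 1 ≤ L) (h1 : 1 ≤ d) (hd : d < 6 * L + 8) :
    HasE L (P1 L d) :=
  if h : d < 2 * L then ed 4 ((2 * L - 1 - d)) cz1 cz1 else
  if h : d < 2 * L + 1 then ed 4 (4 * L + 4) (cs2 4) ce else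
  if h : d < 2 * L + 2 then ed 3 (4 * L + 4) (cs2 4) ce else
  if h : d < 2 * L + 3 then ed 2 (4 * L + 3) (cz2 (2 * L - 1)) (cs2 4) else
  if h : d < 2 * L + 4 then ed 4 (4 * L + 3) (cs2 3) (cs2 4) else
  if h : d < 2 * L + 5 then ed 0 (2 * L + 4) (cs1 4) (cz2 (0)) else
  if h : d < 4 * L + 4 then ed 0 (2 * L + 5 + (d - (2 * L + 5))) (cz2 ((d - (2 * L + 5)))) (cz2 ((d - (2 * L + 5)) + 1)) else
  if h : d < 4 * L + 5 then ed 5 (2 * L + 1) (cs1 1) (cs1 2) else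
  if h : d < 4 * L + 6 then ed 0 (2 * L + 1) (cs1 1) (cs1 2) else
  if h : d < 4 * L + 7 then ed 5 (4 * L + 3) (cz2 (2 * L - 1)) (cs2 4) else
  if h : d < 6 * L + 6 then ed 3 ((d - (4 * L + 7))) cz1 cz1 else
  if h : d < 6 * L + 7 then ed 1 (4 * L + 0) (cs2 0) (cs2 1) else
  ed 4 (2 * L - 1) cz1 (cz2 (0))

set_option maxHeartbeats 1000000 in
theorem covm (L d : ℕ) (hL : 1 ≤ L) (h1 : 13 * L + 13 ≤ d) (hd : d < 25 * L + 28) :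
    HasE L (Q L d) :=
  if h : d < 13 * L + 14 then ed 1 (4 * L - 1) (cz2 (2 * L - 1)) (cs2 0) else
  if h : d < 13 * L + 15 then ed 2 (2 * L + 3) (cs1 3) (cz2 (0)) else
  if h : d < 13 * L + 16 then ed 5 (2 * L - 1) cz1 (cs1 0) else
  if h : d < 13 * L + 17 then ed 3 (2 * L - 1) cz1 (cs1 0) else
  if h : d < 15 * L + 16 then ed 2 (2 * L + 4 + (15 * L + 15 - d)) (cz2 ((15 * L + 15 - d))) (cz2 ((15 * L + 15 - d) + 1)) else
  if h : d < 15 * L + 17 then ed 1 (4 * L + 4) (cs2 4) ce else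
  if h : d < 15 * L + 18 then ed 5 (2 * L + 0) (cs1 0) (cs1 1) else
  if h : d < 15 * L + 19 then ed 2 (4 * L + 4) (cs2 4) ce else
  if h : d < 15 * L + 20 then ed 1 (2 * L - 1) cz1 (cz2 (0)) else
  if h : d < 17 * L + 19 then ed 3 (2 * L + 2 + (d - (15 * L + 20))) (cz2 ((d - (15 * L + 20)))) (cz2 ((d - (15 * L + 20)) + 1)) else
  if h : d < 17 * L + 20 then ed 3 (4 * L + 3) (cs2 3) (cs2 4) else
  if h : d < 17 * L + 21 then ed 2 (2 * L + 2) (cs1 2) (cs1 3) else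
  if h : d < 17 * L + 22 then ed 4 (4 * L + 2) (cs2 2) (cs2 3) else
  if h : d < 17 * L + 23 then ed 3 (2 * L + 1) (cs1 1) (cz2 (0)) else
  if h : d < 19 * L + 22 then ed 4 (2 * L + 0 + (d - (17 * L + 23))) (cz2 ((d - (17 * L + 23)))) (cz2 ((d - (17 * L + 23)) + 1)) else
  if h : d < 19 * L + 23 then ed 0 (2 * L + 3) (cs1 3) (cs1 4) else
  if h : d < 19 * L + 24 then ed 2 (2 * L + 0) (cs1 0) (cs1 1) else
  if h : d < 19 * L + 25 then ed 1 (4 * L + 1) (cs2 1) (cs2 2) else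
  if h : d < 21 * L + 24 then ed 5 ((21 * L + 23 - d)) cz1 cz1 else
  if h : d < 21 * L + 25 then ed 5 (4 * L + 4) (cs2 4) ce else
  if h : d < 21 * L + 26 then ed 1 (4 * L + 3) (cs2 3) (cs2 4) else
  if h : d < 21 * L + 27 then ed 5 (2 * L + 2) (cs1 2) (cs1 3) else
  if h : d < 23 * L + 26 then ed 1 (2 * L + 0 + (d - (21 * L + 27))) (cz2 ((d - (21 * L + 27)))) (cz2 ((d - (21 * L + 27)) + 1)) else
  if h : d < 23 * L + 27 then ed 2 (2 * L - 1) cz1 (cs1 0) else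
  if h : d < 23 * L + 28 then ed 0 (4 * L + 4) (cz2 (2 * L - 1)) ce else
  if h : d < 23 * L + 29 then ed 0 (2 * L + 2) (cs1 2) (cs1 3) else
  ed 5 (2 * L + 4 + (25 * L + 27 - d)) (cz2 ((25 * L + 27 - d))) (cz2 ((25 * L + 27 - d) + 1))

theorem covi0 (L : ℕ) (hL : 1 ≤ L) : HasE L (R0 L) :=
  ed 0 (2 * L - 1) cz1 (cs1 0)

theorem covi1 (L : ℕ) (hL : 1 ≤ L) : HasE L (R1 L) :=
  ed 0 (2 * L + 0) (cs1 0) (cs1 1)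
/-- the union of the closed sequences `c j` -/
def cg {V J : Type*} {k : ℕ} (c : J → ZMod k → V) : SimpleGraph V where
  Adj u w := u ≠ w ∧ ∃ j t, (u = c j t ∧ w = c j (t + 1)) ∨ (w = c j t ∧ u = c j (t + 1))
  symm := ⟨by
    rintro u w ⟨h, j, t, h'⟩
    exact ⟨h.symm, j, t, h'.symm⟩⟩
  loopless := ⟨fun u h => h.1 rfl⟩

section
variable {V J : Type*} {k : ℕ} {c : J → ZMod k → V}

theorem cg_adj (hk : 3 ≤ k) (hc : Function.Injective fun q : J × ZMod k => c q.1 q.2)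
    (j : J) (t : ZMod k) (w : V) :
    (cg c).Adj (c j t) w ↔ w = c j (t + 1) ∨ w = c j (t - 1) := by
  have : Fact (1 < k) := ⟨by omega⟩
  have key : ∀ j j' t t', c j t = c j' t' → j = j' ∧ t = t' := fun j j' t t' h => by
    simpa using @hc (j, t) (j', t') h
  constructor
  · rintro ⟨_, j', t', ⟨h1, h2⟩ | ⟨h1, h2⟩⟩
    · obtain ⟨rfl, rfl⟩ := key _ _ _ _ h1
      exact Or.inl h2
    · obtain ⟨rfl, rfl⟩ := key _ _ _ _ h2
      right
      rw [h1, add_sub_cancel_right]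
  · rintro (rfl | rfl)
    · refine ⟨fun h => ?_, j, t, Or.inl ⟨rfl, rfl⟩⟩
      have := (key _ _ _ _ h).2
      simp at this
    · refine ⟨fun h => ?_, j, t - 1, Or.inr ⟨rfl, by rw [sub_add_cancel]⟩⟩
      have := (key _ _ _ _ h).2
      have h2 := sub_eq_self.mp this.symm
      simp at h2

theorem cg_support (hk : 3 ≤ k) (hc : Function.Injective fun q : J × ZMod k => c q.1 q.2) :
    (cg c).support = Set.range fun q : J × ZMod k => c q.1 q.2 := by
  ext v
  constructor
  · rintro ⟨w, _, j, t, ⟨h, _⟩ | ⟨_, h⟩⟩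
    · exact ⟨(j, t), h.symm⟩
    · exact ⟨(j, t + 1), h.symm⟩
  · rintro ⟨⟨j, t⟩, rfl⟩
    exact ⟨_, (cg_adj hk hc j t _).2 (Or.inl rfl)⟩

theorem cg_reach (hk : 3 ≤ k) (hc : Function.Injective fun q : J × ZMod k => c q.1 q.2)
    (j : J) (t : ZMod k) : {w | (cg c).Reachable (c j t) w} = Set.range (c j) := by
  have : NeZero k := ⟨by omega⟩
  ext w
  constructor
  · rintro ⟨p⟩
    have : ∀ (u w : V) (_ : (cg c).Walk u w), u ∈ Set.range (c j) → w ∈ Set.range (c j) := by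
      intro u w p
      induction p with
      | nil => exact id
      | cons h _ ih =>
        rintro ⟨t, rfl⟩
        apply ih
        rcases (cg_adj hk hc j t _).1 h with rfl | rfl <;> exact ⟨_, rfl⟩
    exact this _ _ p ⟨t, rfl⟩
  · rintro ⟨t', rfl⟩
    have : ∀ i : ℕ, (cg c).Reachable (c j t) (c j (t + i)) := by
      intro i
      induction i with
      | zero => simp
      | succ i ih =>
        refine ih.trans (SimpleGraph.Adj.reachable ?_)
        rw [cg_adj hk hc]
        left
        push_cast
        rw [add_assoc]
    have h := this (t' - t).val
    rwa [ZMod.natCast_zmod_val, add_sub_cancel] at h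

theorem cg_class [Fintype J] (hk : 3 ≤ k)
    (hc : Function.Injective fun q : J × ZMod k => c q.1 q.2) :
    IsCycleClass ⊤ (cg c) k (Fintype.card J) := by
  have : NeZero k := ⟨by omega⟩
  have hin : ∀ j, Function.Injective (c j) := fun j t t' h => by
    simpa using @hc (j, t) (j, t') h
  refine ⟨le_top, ?_, ?_, ?_⟩
  · rw [cg_support hk hc]
    rintro _ ⟨⟨j, t⟩, rfl⟩
    have : (cg c).neighborSet (c j t) = {c j (t + 1), c j (t - 1)} := by
      ext w
      simp [cg_adj hk hc]
    simp only [this]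
    apply Set.ncard_pair
    intro h
    have h1 := hin j h
    have h2 : ((2 : ℕ) : ZMod k) = 0 := by
      have : t + 1 - (t - 1) = 0 := sub_eq_zero.2 h1
      push_cast
      rw [← this]; ring
    rw [ZMod.natCast_eq_zero_iff] at h2
    have := Nat.le_of_dvd (by omega) h2
    omega
  · rw [cg_support hk hc]
    rintro _ ⟨⟨j, t⟩, rfl⟩
    simp only [cg_reach hk hc, Set.ncard_range_of_injective (hin j)]
    simp [ZMod.card]
  · rw [cg_support hk hc, Set.ncard_range_of_injective hc]
    simp [ZMod.card, mul_comm]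

end

/-- Enough to cover every edge: the count then forces a partition. -/
theorem decomp_of_cover {V ι : Type*} [Fintype V] [DecidableEq V] {T : ι → Type} [Fintype ι]
    [instT : ∀ i, Finite (T i)] (F : ι → SimpleGraph V) (f : (i : ι) → T i → Sym2 V)
    (hF : ∀ i e, e ∈ (F i).edgeSet → ∃ q, f i q = e)
    (hcov : ∀ u w : V, u ≠ w → ∃ i, (F i).Adj u w)
    (hcard : ∑ i, Nat.card (T i) = (Fintype.card V).choose 2) :
    IsDecomp (⊤ : SimpleGraph V) F := by
  classical
  have : ∀ i, Fintype (T i) := fun i => Fintype.ofFinite _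
  -- every edge of the complete graph is hit
  have hsub : (⊤ : SimpleGraph V).edgeFinset ⊆
      Finset.univ.image (fun q : (i : ι) × T i => f q.1 q.2) := by
    intro e he
    induction e with
    | _ u w =>
      simp only [SimpleGraph.mem_edgeFinset, SimpleGraph.mem_edgeSet, SimpleGraph.top_adj] at he
      obtain ⟨i, hi⟩ := hcov u w he
      obtain ⟨q, hq⟩ := hF i s(u, w) hi
      simp only [Finset.mem_image, Finset.mem_univ, true_and]
      exact ⟨⟨i, q⟩, hq⟩
  have hc1 : (⊤ : SimpleGraph V).edgeFinset.card = Fintype.card ((i : ι) × T i) := by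
    rw [SimpleGraph.card_edgeFinset_top_eq_card_choose_two, Fintype.card_sigma, ← hcard]
    simp only [Nat.card_eq_fintype_card]
  have hinj : Function.Injective (fun q : (i : ι) × T i => f q.1 q.2) := by
    have h1 := Finset.card_le_card hsub
    have h2 : (Finset.univ.image (fun q : (i : ι) × T i => f q.1 q.2)).card ≤
      (Finset.univ : Finset ((i : ι) × T i)).card := Finset.card_image_le
    rw [hc1] at h1
    have h3 := Finset.card_image_iff.1 (le_antisymm h2 (by simpa using h1))
    simpa using h3
  constructor
  · intro i i' hne
    rw [Set.disjoint_left]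
    intro e h1 h2
    obtain ⟨q, hq⟩ := hF i e h1
    obtain ⟨q', hq'⟩ := hF i' e h2
    have := @hinj ⟨i, q⟩ ⟨i', q'⟩ (hq.trans hq'.symm)
    exact hne (congrArg Sigma.fst this)
  · intro e
    induction e with
    | _ u w =>
      simp only [SimpleGraph.mem_edgeSet, SimpleGraph.top_adj]
      exact ⟨hcov u w, fun ⟨i, hi⟩ => hi.ne⟩

/-- translation by `i` in both levels -/
def sh (n i x : ℕ) : ℕ :=
  if x < n then (if x + i < n then x + i else x + i - n)
  else if x < 2 * n then (if x + i < 2 * n then x + i else x + i - n) else x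

theorem sh_lt {n i x : ℕ} (hi : i < n) (hx : x < 2 * n + 1) : sh n i x < 2 * n + 1 := by
  unfold sh; split_ifs <;> omega

theorem sh_inj {n i x y : ℕ} (hi : i < n) (h : sh n i x = sh n i y) : x = y := by
  unfold sh at h; split_ifs at h <;> omega

theorem g_wrap (L j : ℕ) (hL : 1 ≤ L) : g L j (4 * L + 5) = g L j 0 := by
  have key : ∀ x y x' y' p S, p ≤ 5 →
      cyc L x y x' y' p S (4 * L + 5) = cyc L x y x' y' p S 0 := by
    intro x y x' y' p S hp
    rw [ce, cz1]; rfl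
  unfold g
  split <;> exact key _ _ _ _ _ _ (by omega)

theorem g_lt (L j t : ℕ) (hL : 1 ≤ L) : g L j t < 24 * L + 31 := by
  have hz : ∀ x y s, x + L < 24 * L + 31 → y < 24 * L + 31 → s < 2 * L →
      zz x y s < 24 * L + 31 := by
    intro x y s h1 h2 h3; unfold zz; split_ifs <;> omega
  have hs : ∀ a b c d e i, a < 24 * L + 31 → b < 24 * L + 31 → c < 24 * L + 31 →
      d < 24 * L + 31 → e < 24 * L + 31 → s5 a b c d e i < 24 * L + 31 := by
    intro a b c d e i h1 h2 h3 h4 h5; unfold s5; split <;> assumption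
  have key : ∀ x y x' y' p S, x + L < 24 * L + 31 → y < 24 * L + 31 → x' + L < 24 * L + 31 →
      y' < 24 * L + 31 → (∀ i, S i < 24 * L + 31) → cyc L x y x' y' p S t < 24 * L + 31 := by
    intro x y x' y' p S h1 h2 h3 h4 h5
    unfold cyc
    split_ifs
    · exact hz _ _ _ h1 h2 (by omega)
    · exact h5 _
    · exact hz _ _ _ h3 h4 (by omega)
    · exact h5 _
    · omega
  unfold g
  split <;> exact key _ _ _ _ _ _ (by omega) (by omega) (by omega) (by omega)
    (fun i => hs _ _ _ _ _ _ (by omega) (by omega) (by omega) (by omega) (by omega))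

/-- the four vertices lie pairwise on the same level -/
def SameLv (n a u : ℕ) : Prop := (a < n ∧ u < n) ∨ (n ≤ a ∧ a < 2 * n ∧ n ≤ u ∧ u < 2 * n)

theorem exists_sh {n a u : ℕ} (h : SameLv n a u) : ∃ i, i < n ∧ sh n i a = u ∧
    (u = a + i ∨ u + n = a + i) := by
  unfold SameLv at h
  by_cases h' : a ≤ u
  · exact ⟨u - a, by omega, by unfold sh; split_ifs <;> omega, by omega⟩
  · exact ⟨u + n - a, by omega, by unfold sh; split_ifs <;> omega, by omega⟩

theorem exists_sh2 {n a b u w : ℕ} (h : SameLv n a u) (h' : SameLv n b w)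
    (e : b + u = a + w ∨ b + u = a + w + n ∨ b + u + n = a + w) :
    ∃ i, i < n ∧ sh n i a = u ∧ sh n i b = w := by
  obtain ⟨i, hi, h1, h2⟩ := exists_sh h
  refine ⟨i, hi, h1, ?_⟩
  unfold SameLv at h'
  unfold sh
  split_ifs <;> omega

/-- some translate of a base edge is `{u, w}` -/
def Cov (L u w : ℕ) : Prop := ∃ i, i < 12 * L + 15 ∧
  HasE L fun a b => (sh (12 * L + 15) i a = u ∧ sh (12 * L + 15) i b = w) ∨
    (sh (12 * L + 15) i a = w ∧ sh (12 * L + 15) i b = u)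

theorem cov_of {L u w : ℕ} {P : ℕ → ℕ → Prop} (h : HasE L P)
    (hP : ∀ a b, P a b → ∃ i, i < 12 * L + 15 ∧
      ((sh (12 * L + 15) i a = u ∧ sh (12 * L + 15) i b = w) ∨
      (sh (12 * L + 15) i a = w ∧ sh (12 * L + 15) i b = u))) : Cov L u w := by
  obtain ⟨j, hj, t, ht, h⟩ := h
  obtain ⟨i, hi, h⟩ := hP _ _ h
  exact ⟨i, hi, j, hj, t, ht, h⟩

theorem two_way {n a b u w : ℕ}
    (h : (SameLv n a u ∧ SameLv n b w ∧
        (b + u = a + w ∨ b + u = a + w + n ∨ b + u + n = a + w)) ∨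
      (SameLv n a w ∧ SameLv n b u ∧
        (b + w = a + u ∨ b + w = a + u + n ∨ b + w + n = a + u))) :
    ∃ i, i < n ∧ ((sh n i a = u ∧ sh n i b = w) ∨ (sh n i a = w ∧ sh n i b = u)) := by
  rcases h with ⟨h1, h2, h3⟩ | ⟨h1, h2, h3⟩
  · obtain ⟨i, hi, h⟩ := exists_sh2 h1 h2 h3
    exact ⟨i, hi, Or.inl h⟩
  · obtain ⟨i, hi, h⟩ := exists_sh2 h1 h2 h3
    exact ⟨i, hi, Or.inr h⟩

theorem inf_way {n a b u : ℕ}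
    (h : (SameLv n a u ∧ b = 2 * n) ∨ (SameLv n b u ∧ a = 2 * n)) :
    ∃ i, i < n ∧ ((sh n i a = u ∧ sh n i b = 2 * n) ∨ (sh n i a = 2 * n ∧ sh n i b = u)) := by
  have h0 : ∀ i, sh n i (2 * n) = 2 * n := by
    intro i; unfold sh; split_ifs <;> omega
  rcases h with ⟨h1, rfl⟩ | ⟨h1, rfl⟩
  · obtain ⟨i, hi, h, _⟩ := exists_sh h1
    exact ⟨i, hi, Or.inl ⟨h, h0 i⟩⟩
  · obtain ⟨i, hi, h, _⟩ := exists_sh h1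
    exact ⟨i, hi, Or.inr ⟨h0 i, h⟩⟩

theorem cover (L u w : ℕ) (hL : 1 ≤ L) (huw : u < w) (hw : w < 24 * L + 31) :
    (w < 12 * L + 15 ∧ (w = u + 3 ∨ w + 3 = u + (12 * L + 15))) ∨ Cov L u w := by
  by_cases h1 : w < 12 * L + 15
  · by_cases h3 : w = u + 3 ∨ w + 3 = u + (12 * L + 15)
    · exact Or.inl ⟨h1, h3⟩
    right
    obtain ⟨d, hd, hd', hd3, e⟩ : ∃ d, 1 ≤ d ∧ d < 6 * L + 8 ∧ d ≠ 3 ∧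
        (w = u + d ∨ w + d = u + (12 * L + 15)) := by
      by_cases h : w - u < 6 * L + 8
      · exact ⟨w - u, by omega, h, by omega, by omega⟩
      · exact ⟨u + (12 * L + 15) - w, by omega, by omega, by omega, by omega⟩
    refine cov_of (cov0 L d hL hd hd' hd3) fun a b h => two_way ?_
    unfold P0 at h
    unfold SameLv
    omega
  right
  by_cases h2 : w = 24 * L + 30
  · subst h2
    have h30 : 24 * L + 30 = 2 * (12 * L + 15) := by ring
    by_cases h3 : u < 12 * L + 15
    · refine cov_of (covi0 L hL) fun a b h => ?_
      rw [h30]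
      refine inf_way ?_
      unfold R0 at h
      unfold SameLv
      omega
    · refine cov_of (covi1 L hL) fun a b h => ?_
      rw [h30]
      refine inf_way ?_
      unfold R1 at h
      unfold SameLv
      omega
  by_cases h3 : u < 12 * L + 15
  · obtain ⟨d, hd, hd', e⟩ : ∃ d, 13 * L + 13 ≤ d ∧ d < 25 * L + 28 ∧
        (w = u + d + (12 * L + 15) ∨ w = u + d ∨ w + (12 * L + 15) = u + d ∨
          w + (24 * L + 30) = u + d) := by
      by_cases h : 25 * L + 28 + u ≤ w
      · exact ⟨w - (12 * L + 15) - u, by omega, by omega, by omega⟩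
      by_cases h : 13 * L + 13 + u ≤ w
      · exact ⟨w - u, by omega, by omega, by omega⟩
      by_cases h : 13 * L + 13 + u ≤ w + (12 * L + 15)
      · exact ⟨w + (12 * L + 15) - u, by omega, by omega, by omega⟩
      · exact ⟨w + (24 * L + 30) - u, by omega, by omega, by omega⟩
    refine cov_of (covm L d hL hd hd') fun a b h => two_way ?_
    unfold Q Q' at h
    unfold SameLv
    omega
  · obtain ⟨d, hd, hd', e⟩ : ∃ d, 1 ≤ d ∧ d < 6 * L + 8 ∧
        (w = u + d ∨ w + d = u + (12 * L + 15)) := by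
      by_cases h : w - u < 6 * L + 8
      · exact ⟨w - u, by omega, h, by omega⟩
      · exact ⟨u + (12 * L + 15) - w, by omega, by omega, by omega⟩
    refine cov_of (cov1 L d hL hd hd') fun a b h => two_way ?_
    unfold P1 at h
    unfold SameLv
    omega

theorem g_inj (L : ℕ) (hL : 1 ≤ L) :
    Function.Injective fun q : Fin 6 × ZMod (4 * L + 5) => g L q.1 q.2.val := by
  have : NeZero (4 * L + 5) := ⟨by omega⟩
  have hsub : (Finset.range (24 * L + 31)).erase (10 * L + 13) ⊆ Finset.univ.image
      (fun q : Fin 6 × ZMod (4 * L + 5) => g L q.1 q.2.val) := by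
    intro d hd
    simp only [Finset.mem_erase, Finset.mem_range] at hd
    obtain ⟨j, hj, t, ht, h⟩ := cov_v L d hL hd.2 hd.1
    simp only [Finset.mem_image, Finset.mem_univ, true_and]
    exact ⟨(⟨j, hj⟩, (t : ZMod (4 * L + 5))), by simp only [ZMod.val_natCast_of_lt ht, h]⟩
  have h1 := Finset.card_le_card hsub
  rw [Finset.card_erase_of_mem (by simp; omega), Finset.card_range] at h1
  have h2 : (Finset.univ.image
      (fun q : Fin 6 × ZMod (4 * L + 5) => g L q.1 q.2.val)).card ≤ _ := Finset.card_image_le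
  have h3 : (Finset.univ : Finset (Fin 6 × ZMod (4 * L + 5))).card = 6 * (4 * L + 5) := by
    simp [ZMod.card]
  have h4 := Finset.card_image_iff.1 (le_antisymm h2 (by omega))
  simpa using h4

theorem val_succ {k : ℕ} (t : ℕ) (ht : t < k) :
    ((t : ZMod k) + 1).val = if t + 1 < k then t + 1 else 0 := by
  have e : ((t : ZMod k) + 1) = ((t + 1 : ℕ) : ZMod k) := by push_cast; rfl
  rw [e]
  split_ifs with h
  · exact ZMod.val_natCast_of_lt h
  · have : t + 1 = k := by omega
    rw [this, ZMod.natCast_self, ZMod.val_zero]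

theorem main (L : ℕ) (hL : 1 ≤ L) : IsARCS (4 * L + 5) (6 * (4 * L + 5) + 1) := by
  have : NeZero (4 * L + 5) := ⟨by omega⟩
  have e1 : (6 * (4 * L + 5) + 1 - 1) / 2 = 12 * L + 15 := by omega
  have e2 : (6 * (4 * L + 5) + 1 - 1) / (4 * L + 5) = Fintype.card (Fin 6) := by
    rw [Nat.add_sub_cancel, Nat.mul_div_cancel _ (by omega)]; simp
  have e3 : (6 * (4 * L + 5) + 1 - 1) / (2 * (4 * L + 5)) = Fintype.card (Fin 3) := by
    rw [Nat.add_sub_cancel, show 6 * (4 * L + 5) = 3 * (2 * (4 * L + 5)) by ring,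
      Nat.mul_div_cancel _ (by omega)]; simp
  unfold IsARCS
  rw [e1, e2, e3]
  -- the translates of the base cycles, and the half-parallel class
  let c : Fin (12 * L + 15) → Fin 6 → ZMod (4 * L + 5) → Fin (6 * (4 * L + 5) + 1) :=
    fun i j t => ⟨sh (12 * L + 15) i (g L j t.val), by
      have := sh_lt i.2 (x := g L j t.val) (by have := g_lt L j t.val hL; omega)
      omega⟩
  let h : Fin 3 → ZMod (4 * L + 5) → Fin (6 * (4 * L + 5) + 1) :=
    fun j t => ⟨j + 3 * t.val, by have := ZMod.val_lt t; omega⟩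
  have hc : ∀ i, Function.Injective fun q : Fin 6 × ZMod (4 * L + 5) => c i q.1 q.2 := by
    intro i q q' hq
    exact g_inj L hL (sh_inj i.2 (congrArg Fin.val hq))
  have hh : Function.Injective fun q : Fin 3 × ZMod (4 * L + 5) => h q.1 q.2 := by
    rintro ⟨j, t⟩ ⟨j', t'⟩ hq
    have hq := congrArg Fin.val hq
    simp only [h] at hq
    have h1 : j = j' := Fin.ext (by omega)
    have h2 : t = t' := ZMod.val_injective _ (by omega)
    rw [h1, h2]
  refine ⟨Sum.elim (fun i => cg (c i)) (fun _ => cg h), fun i => cg_class (by omega) (hc i),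
    fun _ => cg_class (by omega) hh, ?_⟩
  have hcov : ∀ u w : Fin (6 * (4 * L + 5) + 1), u < w →
      ∃ i, (Sum.elim (fun i => cg (c i)) (fun _ : Unit => cg h) i).Adj u w := by
    intro u w huw
    rcases cover L u w hL huw (by omega) with ⟨h1, h2⟩ | ⟨i, hi, j, hj, t, ht, hE⟩
    · refine ⟨Sum.inr (), ?_⟩
      rcases h2 with h2 | h2
      · refine ⟨huw.ne, ⟨u % 3, by omega⟩, ((u / 3 : ℕ) : ZMod (4 * L + 5)), Or.inl ⟨?_, ?_⟩⟩
        · apply Fin.ext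
          simp only [h]
          rw [ZMod.val_natCast_of_lt (by omega)]
          omega
        · apply Fin.ext
          simp only [h]
          rw [val_succ _ (by omega), if_pos (by omega)]
          omega
      · refine ⟨huw.ne, ⟨w % 3, by omega⟩, ((w / 3 : ℕ) : ZMod (4 * L + 5)), Or.inr ⟨?_, ?_⟩⟩
        · apply Fin.ext
          simp only [h]
          rw [ZMod.val_natCast_of_lt (by omega)]
          omega
        · apply Fin.ext
          simp only [h]
          rw [val_succ _ (by omega), if_neg (by omega)]
          omega
    · refine ⟨Sum.inl ⟨i, hi⟩, huw.ne, ⟨j, hj⟩, (t : ZMod (4 * L + 5)), ?_⟩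
      have a1 : (c ⟨i, hi⟩ ⟨j, hj⟩ (t : ZMod (4 * L + 5))).val =
          sh (12 * L + 15) i (g L j t) := by
        simp only [c]
        rw [ZMod.val_natCast_of_lt ht]
      have a2 : (c ⟨i, hi⟩ ⟨j, hj⟩ ((t : ZMod (4 * L + 5)) + 1)).val =
          sh (12 * L + 15) i (g L j (t + 1)) := by
        simp only [c]
        rw [val_succ _ ht]
        split_ifs with h'
        · rfl
        · rw [show t + 1 = 4 * L + 5 by omega, g_wrap L j hL]
      rcases hE with ⟨b1, b2⟩ | ⟨b1, b2⟩
      · exact Or.inl ⟨Fin.ext (by rw [a1, b1]), Fin.ext (by rw [a2, b2])⟩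
      · exact Or.inr ⟨Fin.ext (by rw [a1, b1]), Fin.ext (by rw [a2, b2])⟩
  refine decomp_of_cover
    (T := Sum.elim (fun _ => Fin 6 × ZMod (4 * L + 5)) (fun _ => Fin 3 × ZMod (4 * L + 5)))
    (instT := fun i => by cases i <;> exact inferInstanceAs (Finite (_ × ZMod (4 * L + 5)))) _
    (fun i => match i with
      | Sum.inl i => fun q => s(c i q.1 q.2, c i q.1 (q.2 + 1))
      | Sum.inr _ => fun q => s(h q.1 q.2, h q.1 (q.2 + 1))) ?_ ?_ ?_
  · have key : ∀ {J : Type} (c : J → ZMod (4 * L + 5) → Fin (6 * (4 * L + 5) + 1)) e,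
        e ∈ (cg c).edgeSet → ∃ q : J × ZMod (4 * L + 5), s(c q.1 q.2, c q.1 (q.2 + 1)) = e := by
      intro J c e he
      induction e with
      | _ u w =>
        obtain ⟨_, j, t, ⟨rfl, rfl⟩ | ⟨rfl, rfl⟩⟩ := he
        · exact ⟨(j, t), rfl⟩
        · exact ⟨(j, t), Sym2.eq_swap⟩
    rintro (i | i) e he
    · exact key (c i) e he
    · exact key h e he
  · intro u w hne
    rcases lt_or_gt_of_ne hne with h' | h'
    · exact hcov u w h'
    · obtain ⟨i, hi⟩ := hcov w u h'
      exact ⟨i, hi.symm⟩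
  · rw [Fintype.sum_sum_type]
    have c1 : Nat.card (Fin 6 × ZMod (4 * L + 5)) = 6 * (4 * L + 5) := by simp
    have c2 : Nat.card (Fin 3 × ZMod (4 * L + 5)) = 3 * (4 * L + 5) := by simp
    have c3 : (6 * (4 * L + 5) + 1).choose 2 =
        (12 * L + 15) * (6 * (4 * L + 5)) + 3 * (4 * L + 5) := by
      rw [Nat.choose_two_right, Nat.add_sub_cancel]
      apply Nat.div_eq_of_eq_mul_left (by omega)
      ring
    rw [Fintype.card_fin, c3]
    change (∑ _i : Fin (12 * L + 15), Nat.card (Fin 6 × ZMod (4 * L + 5))) +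
      (∑ _i : Unit, Nat.card (Fin 3 × ZMod (4 * L + 5))) = _
    rw [c1, c2]
    simp

theorem stmt6 (k : ℕ) (h9 : 9 ≤ k) (hk : k % 4 = 1) : IsARCS k (6 * k + 1) := by
  obtain ⟨L, rfl⟩ : ∃ L, k = 4 * L + 5 := ⟨(k - 5) / 4, by omega⟩
  exact main L (by omega)
end

section
/- For every integer k ≥ 11 with k ≡ 3 (mod 4), there exists a k-ARCS(6k+1), i.e. an almost resolvable k-cycle system of order 6k+1. -/
open SimpleGraph

/-! ### Generic part: cycle classes from closed sequences -/

/-- The union of the closed walks `g i`. -/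
def cycGraph {V ι : Type*} {k : ℕ} (g : ι → ZMod k → V) : SimpleGraph V :=
  SimpleGraph.fromRel (fun u v => ∃ i j, u = g i j ∧ v = g i (j + 1))

lemma zmod_one_ne {k : ℕ} (hk : 3 ≤ k) : (1 : ZMod k) ≠ 0 := by
  have : Fact (1 < k) := ⟨by omega⟩
  exact one_ne_zero

lemma zmod_two_ne {k : ℕ} (hk : 3 ≤ k) : (2 : ZMod k) ≠ 0 := by
  intro h
  have h2 : ((2 : ℕ) : ZMod k) = 0 := by exact_mod_cast h
  rw [ZMod.natCast_eq_zero_iff] at h2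
  have := Nat.le_of_dvd (by norm_num) h2
  omega

lemma cycGraph_adj {V ι : Type*} {k : ℕ} (hk : 3 ≤ k) (g : ι → ZMod k → V)
    (hg : Function.Injective (fun p : ι × ZMod k => g p.1 p.2)) (u v : V) :
    (cycGraph g).Adj u v ↔
      ∃ i j, (u = g i j ∧ v = g i (j + 1)) ∨ (v = g i j ∧ u = g i (j + 1)) := by
  unfold cycGraph
  rw [SimpleGraph.fromRel_adj]
  constructor
  · rintro ⟨-, ⟨i, j, h⟩ | ⟨i, j, h⟩⟩
    · exact ⟨i, j, Or.inl h⟩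
    · exact ⟨i, j, Or.inr h⟩
  · have key : ∀ i j, g i j ≠ g i (j + 1) := by
      intro i j h
      have h2 := @hg (i, j) (i, j + 1) h
      have h3 := (Prod.mk.inj h2).2
      exact zmod_one_ne hk (left_eq_add.mp h3)
    rintro ⟨i, j, ⟨rfl, rfl⟩ | ⟨rfl, rfl⟩⟩
    · exact ⟨key i j, Or.inl ⟨i, j, rfl, rfl⟩⟩
    · exact ⟨(key i j).symm, Or.inr ⟨i, j, rfl, rfl⟩⟩

lemma cycGraph_isCycleClass {V : Type*} {k c : ℕ} (hk : 3 ≤ k) (g : Fin c → ZMod k → V)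
    (hg : Function.Injective (fun p : Fin c × ZMod k => g p.1 p.2)) :
    IsCycleClass ⊤ (cycGraph g) k c := by
  have : NeZero k := ⟨by omega⟩
  have hadj := cycGraph_adj hk g hg
  have inj : ∀ {i j i' j'}, g i j = g i' j' → i = i' ∧ j = j' := by
    intro i j i' j' h
    exact Prod.mk.inj (@hg (i, j) (i', j') h)
  have hsupp : (cycGraph g).support = Set.range (fun p : Fin c × ZMod k => g p.1 p.2) := by
    ext v
    rw [SimpleGraph.mem_support]
    constructor
    · rintro ⟨w, hw⟩
      obtain ⟨i, j, ⟨h, -⟩ | ⟨-, h⟩⟩ := (hadj _ _).1 hw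
      · exact ⟨(i, j), h.symm⟩
      · exact ⟨(i, j + 1), h.symm⟩
    · rintro ⟨⟨i, j⟩, rfl⟩
      exact ⟨g i (j + 1), (hadj _ _).2 ⟨i, j, Or.inl ⟨rfl, rfl⟩⟩⟩
  refine ⟨le_top, ?_, ?_, ?_⟩
  · intro v hv
    rw [hsupp] at hv
    obtain ⟨⟨i, j⟩, rfl⟩ := hv
    have : (cycGraph g).neighborSet (g i j) = {g i (j + 1), g i (j - 1)} := by
      ext w
      rw [SimpleGraph.mem_neighborSet, hadj]
      simp only [Set.mem_insert_iff, Set.mem_singleton_iff]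
      constructor
      · rintro ⟨i', j', ⟨h, h'⟩ | ⟨h, h'⟩⟩
        · obtain ⟨rfl, rfl⟩ := inj h
          exact Or.inl h'
        · obtain ⟨rfl, rfl⟩ := inj h'
          right
          rw [h, add_sub_cancel_right]
      · rintro (h | h)
        · exact ⟨i, j, Or.inl ⟨rfl, h⟩⟩
        · exact ⟨i, j - 1, Or.inr ⟨h, by rw [sub_add_cancel]⟩⟩
    simp only
    rw [this, Set.ncard_pair]
    intro h
    have h2 := (inj h).2
    apply zmod_two_ne hk
    linear_combination h2
  · intro v hv
    rw [hsupp] at hv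
    obtain ⟨⟨i, j⟩, rfl⟩ := hv
    have hset : {w | (cycGraph g).Reachable (g i j) w} = Set.range (g i) := by
      ext w
      simp only [Set.mem_ofPred_eq, Set.mem_range]
      constructor
      · intro h
        rw [SimpleGraph.reachable_iff_reflTransGen] at h
        induction h with
        | refl => exact ⟨j, rfl⟩
        | tail _ h2 ih =>
          obtain ⟨a, ha⟩ := ih
          obtain ⟨i', j', ⟨h, h'⟩ | ⟨h', h⟩⟩ := (hadj _ _).1 h2
          · rw [← ha] at h
            obtain ⟨rfl, rfl⟩ := inj h
            exact ⟨_, h'.symm⟩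
          · rw [← ha] at h
            obtain ⟨rfl, rfl⟩ := inj h
            exact ⟨_, h'.symm⟩
      · have step : ∀ s : ℕ, (cycGraph g).Reachable (g i j) (g i (j + (s : ZMod k))) := by
          intro s
          induction s with
          | zero => simp
          | succ s ih =>
            refine ih.trans (SimpleGraph.Adj.reachable ((hadj _ _).2 ⟨i, j + s, Or.inl ⟨rfl, ?_⟩⟩))
            push_cast
            rw [add_assoc]
        rintro ⟨a, rfl⟩
        have := step (a - j).val
        rw [ZMod.natCast_zmod_val, add_sub_cancel] at this
        exact this
    simp only
    rw [hset, ← Set.image_univ, Set.ncard_image_of_injective _ (fun a b h => (inj h).2),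
      Set.ncard_univ, Nat.card_zmod]
  · rw [hsupp, ← Set.image_univ, Set.ncard_image_of_injective _ hg, Set.ncard_univ,
      Nat.card_prod, Nat.card_zmod, Nat.card_eq_fintype_card, Fintype.card_fin, mul_comm]

lemma cyc_decomp {V I : Type*} [Fintype V] [DecidableEq V] [Fintype I] {k : ℕ} (hk : 3 ≤ k)
    (c : I → ℕ) (g : (i : I) → Fin (c i) → ZMod k → V)
    (hg : ∀ i, Function.Injective (fun p : Fin (c i) × ZMod k => g i p.1 p.2))
    (hcard : (∑ i, c i) * k = (Fintype.card V).choose 2)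
    (hsurj : ∀ u v, u ≠ v → ∃ i a j,
      (u = g i a j ∧ v = g i a (j + 1)) ∨ (v = g i a j ∧ u = g i a (j + 1))) :
    IsDecomp (⊤ : SimpleGraph V) (fun i => cycGraph (g i)) := by
  have : NeZero k := ⟨by omega⟩
  have hadj := fun i => cycGraph_adj hk (g i) (hg i)
  let A := Σ i, Fin (c i) × ZMod k
  have hne : ∀ i a j, g i a j ≠ g i a (j + 1) := by
    intro i a j
    exact ((hadj i _ _).2 ⟨a, j, Or.inl ⟨rfl, rfl⟩⟩).ne
  let e : A → {s : Sym2 V // ¬ s.IsDiag} := fun x =>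
    ⟨s(g x.1 x.2.1 x.2.2, g x.1 x.2.1 (x.2.2 + 1)), by
      rw [Sym2.mk_isDiag_iff]; exact hne _ _ _⟩
  have hs : Function.Surjective e := by
    rintro ⟨s, hsd⟩
    induction s using Sym2.ind with
    | _ u v =>
      rw [Sym2.mk_isDiag_iff] at hsd
      obtain ⟨i, a, j, ⟨h, h'⟩ | ⟨h, h'⟩⟩ := hsurj u v hsd
      · refine ⟨⟨i, a, j⟩, Subtype.ext ?_⟩
        simp only [e, h, h']
      · refine ⟨⟨i, a, j⟩, Subtype.ext ?_⟩
        simp only [e, h, h']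
        exact Sym2.eq_swap
  have hb : Function.Bijective e := by
    rw [Fintype.bijective_iff_surjective_and_card]
    refine ⟨hs, ?_⟩
    rw [Sym2.card_subtype_not_diag, ← hcard]
    simp only [A, Fintype.card_sigma, Fintype.card_prod, Fintype.card_fin, ZMod.card]
    rw [Finset.sum_mul]
  have hedge : ∀ i (s : Sym2 V), s ∈ (cycGraph (g i)).edgeSet →
      ∃ a j, s = s(g i a j, g i a (j + 1)) := by
    intro i s
    induction s using Sym2.ind with
    | _ u v =>
      rw [SimpleGraph.mem_edgeSet, hadj]
      rintro ⟨a, j, ⟨rfl, rfl⟩ | ⟨rfl, rfl⟩⟩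
      · exact ⟨a, j, rfl⟩
      · exact ⟨a, j, Sym2.eq_swap⟩
  constructor
  · intro i i' hii
    simp only
    rw [Set.disjoint_left]
    intro s h1 h2
    obtain ⟨a, j, h1⟩ := hedge _ _ h1
    obtain ⟨a', j', h2⟩ := hedge _ _ h2
    have : e ⟨i, a, j⟩ = e ⟨i', a', j'⟩ := Subtype.ext (h1.symm.trans h2)
    exact hii (congrArg Sigma.fst (hb.1 this))
  · intro s
    induction s using Sym2.ind with
    | _ u v =>
      simp only [SimpleGraph.mem_edgeSet, SimpleGraph.top_adj]
      constructor
      · intro h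
        obtain ⟨i, a, j, h⟩ := hsurj u v h
        exact ⟨i, (hadj _ _ _).2 ⟨a, j, h⟩⟩
      · rintro ⟨i, h⟩
        exact h.ne

/-- Points: `∞` together with two copies of `ZMod n`. -/
abbrev Pt (n : ℕ) := Option (Bool × ZMod n)

def shift {n : ℕ} (x : ZMod n) (w : Pt n) : Pt n := w.map (fun p => (p.1, p.2 + x))

lemma shift_inj {n : ℕ} (x : ZMod n) : Function.Injective (shift x) := by
  apply Option.map_injective
  rintro ⟨a, b⟩ ⟨a', b'⟩ h
  simp only [Prod.mk.injEq, add_left_inj] at h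
  exact Prod.ext h.1 h.2

/-- Unordered base adjacency. -/
def Eb {n k : ℕ} (f : Fin 6 → ZMod k → Pt n) (u v : Pt n) : Prop :=
  ∃ i j, (u = f i j ∧ v = f i (j + 1)) ∨ (v = f i j ∧ u = f i (j + 1))

lemma Eb.symm {n k : ℕ} {f : Fin 6 → ZMod k → Pt n} {u v : Pt n} (h : Eb f u v) : Eb f v u := by
  obtain ⟨i, j, h⟩ := h
  exact ⟨i, j, h.symm⟩

def halfc (k : ℕ) (a : Fin 3) (j : ZMod k) : Pt (3 * k) :=
  some (false, ((a.val + 3 * j.val : ℕ) : ZMod (3 * k)))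

lemma halfc_inj {k : ℕ} (hk : 3 ≤ k) :
    Function.Injective (fun p : Fin 3 × ZMod k => halfc k p.1 p.2) := by
  have : NeZero k := ⟨by omega⟩
  rintro ⟨a, j⟩ ⟨a', j'⟩ h
  simp only [halfc, Option.some.injEq, Prod.mk.injEq, true_and] at h
  have h1 := ZMod.val_lt j
  have h2 := ZMod.val_lt j'
  rw [ZMod.natCast_eq_natCast_iff', Nat.mod_eq_of_lt (by omega), Nat.mod_eq_of_lt (by omega)] at h
  have h3 : j.val = j'.val := by omega
  refine Prod.ext (Fin.ext (by simp only; omega)) (ZMod.val_injective k h3)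

lemma halfc_succ {k : ℕ} (hk : 3 ≤ k) (y : ZMod (3 * k)) :
    ∃ a j, halfc k a j = some (false, y) ∧ halfc k a (j + 1) = some (false, y + 3) := by
  have : NeZero k := ⟨by omega⟩
  have : NeZero (3 * k) := ⟨by omega⟩
  have hy := ZMod.val_lt y
  refine ⟨⟨y.val % 3, by omega⟩, ((y.val / 3 : ℕ) : ZMod k), ?_, ?_⟩
  · simp only [halfc]
    rw [ZMod.val_natCast, Nat.mod_eq_of_lt (a := y.val / 3) (by omega), Nat.mod_add_div,
      ZMod.natCast_zmod_val]
  · have : (((y.val / 3 : ℕ) : ZMod k) + 1).val = (y.val / 3 + 1) % k := by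
      rw [← Nat.cast_succ, ZMod.val_natCast]
    simp only [halfc]
    rw [this]
    have h2 : y + 3 = ((y.val + 3 : ℕ) : ZMod (3 * k)) := by
      push_cast
      rw [ZMod.natCast_zmod_val]
    rw [h2]
    congr 2
    rw [ZMod.natCast_eq_natCast_iff', ← Nat.mul_mod_mul_left]
    conv_lhs => rw [Nat.add_mod, Nat.mod_mod, ← Nat.add_mod]
    congr 1
    omega

theorem arcs_of_base {k : ℕ} (hk : 3 ≤ k) (hodd : k % 2 = 1) (f : Fin 6 → ZMod k → Pt (3 * k))
    (hcov : ∀ w : Pt (3 * k), w ≠ some (false, 0) → ∃ i j, f i j = w)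
    (hinf : ∀ b, ∃ y, Eb f none (some (b, y)))
    (hpure : ∀ b (d : ℤ), 1 ≤ d → 2 * d < 3 * k → (b = false → d ≠ 3) →
      ∃ y, Eb f (some (b, y)) (some (b, y + (d : ZMod (3 * k)))))
    (hmix : ∀ d : ℤ, 0 ≤ d → d < 3 * k →
      ∃ y, Eb f (some (false, y)) (some (true, y + (d : ZMod (3 * k))))) :
    IsARCS k (6 * k + 1) := by
  have : NeZero k := ⟨by omega⟩
  have : NeZero (3 * k) := ⟨by omega⟩
  have hcardP : Fintype.card (Pt (3 * k)) = 6 * k + 1 := by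
    simp only [Pt, Fintype.card_option, Fintype.card_prod, Fintype.card_bool, ZMod.card]
    ring
  have hfinj : Function.Injective (fun p : Fin 6 × ZMod k => f p.1 p.2) := by
    rw [← Set.injOn_univ, ← Finset.coe_univ, ← Finset.card_image_iff]
    apply le_antisymm Finset.card_image_le
    have hsub : (Finset.univ.erase (some (false, 0) : Pt (3 * k))) ⊆
        Finset.image (fun p : Fin 6 × ZMod k => f p.1 p.2) Finset.univ := by
      intro w hw
      obtain ⟨i, j, h⟩ := hcov w (Finset.ne_of_mem_erase hw)
      exact Finset.mem_image.2 ⟨(i, j), Finset.mem_univ _, h⟩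
    have := Finset.card_le_card hsub
    rw [Finset.card_erase_of_mem (Finset.mem_univ _), Finset.card_univ, hcardP] at this
    simp only [Finset.card_univ, Fintype.card_prod, Fintype.card_fin, ZMod.card]
    omega
  let e : Pt (3 * k) ≃ Fin (6 * k + 1) := Fintype.equivFinOfCardEq hcardP
  have e1 : (6 * k + 1 - 1) / 2 = 3 * k := by omega
  have e2 : (6 * k + 1 - 1) / k = 6 := by
    rw [Nat.add_sub_cancel]; exact Nat.mul_div_cancel _ (by omega)
  have e3 : (6 * k + 1 - 1) / (2 * k) = 3 := by
    rw [Nat.add_sub_cancel, show 6 * k = 3 * (2 * k) by ring]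
    exact Nat.mul_div_cancel _ (by omega)
  unfold IsARCS
  rw [e1, e2, e3]
  let c : Fin (3 * k) ⊕ Unit → ℕ := Sum.elim (fun _ => 6) (fun _ => 3)
  let g : (i : Fin (3 * k) ⊕ Unit) → Fin (c i) → ZMod k → Fin (6 * k + 1) := fun i =>
    match i with
    | Sum.inl x => fun a j => e (shift (x.val : ZMod (3 * k)) (f a j))
    | Sum.inr _ => fun a j => e (halfc k a j)
  have hg : ∀ i, Function.Injective (fun p : Fin (c i) × ZMod k => g i p.1 p.2) := by
    rintro (x | x)
    · exact e.injective.comp ((shift_inj _).comp hfinj)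
    · exact e.injective.comp (halfc_inj hk)
  refine ⟨fun i => cycGraph (g i), fun i => cycGraph_isCycleClass hk _ (hg (Sum.inl i)),
    fun i => cycGraph_isCycleClass hk _ (hg (Sum.inr i)), ?_⟩
  refine cyc_decomp hk c g hg ?_ ?_
  · simp only [Fintype.sum_sum_type, c, Sum.elim_inl, Sum.elim_inr, Finset.sum_const,
      Finset.card_univ, Fintype.card_fin, Fintype.card_unit, smul_eq_mul, one_mul]
    rw [Nat.choose_two_right, Nat.add_sub_cancel]
    symm
    apply Nat.div_eq_of_eq_mul_left (by norm_num)
    ring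
  · -- surjectivity on pairs
    let Q : Pt (3 * k) → Pt (3 * k) → Prop := fun u v => ∃ i a j,
      (e u = g i a j ∧ e v = g i a (j + 1)) ∨ (e v = g i a j ∧ e u = g i a (j + 1))
    have Qsymm : ∀ u v, Q u v → Q v u := by
      rintro u v ⟨i, a, j, h⟩
      exact ⟨i, a, j, h.symm⟩
    have Qshift : ∀ u v (x : ZMod (3 * k)), Eb f u v → Q (shift x u) (shift x v) := by
      rintro u v x ⟨a, j, h⟩
      refine ⟨Sum.inl ⟨x.val, ZMod.val_lt x⟩, a, j, ?_⟩
      simp only [g, ZMod.natCast_zmod_val]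
      rcases h with ⟨rfl, rfl⟩ | ⟨rfl, rfl⟩
      · exact Or.inl ⟨rfl, rfl⟩
      · exact Or.inr ⟨rfl, rfl⟩
    have Qinf : ∀ b y, Q none (some (b, y)) := by
      intro b y
      obtain ⟨z, hz⟩ := hinf b
      have := Qshift _ _ (y - z) hz
      simpa [shift] using this
    have Qpure0 : ∀ b y (d : ℤ), 1 ≤ d → 2 * d < 3 * k →
        Q (some (b, y)) (some (b, y + (d : ZMod (3 * k)))) := by
      intro b y d h1 h2
      by_cases h3 : b = false ∧ d = 3
      · obtain ⟨rfl, rfl⟩ := h3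
        obtain ⟨a, j, ha, hb⟩ := halfc_succ hk y
        refine ⟨Sum.inr (), a, j, Or.inl ⟨?_, ?_⟩⟩
        · simp only [g, ha]
        · simp only [g, hb]
          norm_num
      · obtain ⟨z, hz⟩ := hpure b d h1 h2 (fun h h' => h3 ⟨h, h'⟩)
        have := Qshift _ _ (y - z) hz
        simp only [shift, Option.map_some] at this
        convert this using 3
        · ring
        · ring
    have Qpure : ∀ b y z, y ≠ z → Q (some (b, y)) (some (b, z)) := by
      intro b y z hyz
      have hlt := ZMod.val_lt (z - y)
      have hpos : (z - y).val ≠ 0 := by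
        rw [Ne, ZMod.val_eq_zero, sub_eq_zero]
        exact fun h => hyz h.symm
      have hz : ((z - y).val : ZMod (3 * k)) = z - y := ZMod.natCast_zmod_val _
      by_cases h : 2 * (z - y).val < 3 * k
      · have := Qpure0 b y ((z - y).val : ℤ) (by omega) (by omega)
        rw [Int.cast_natCast, hz] at this
        simpa using this
      · have := Qpure0 b z (3 * k - (z - y).val : ℤ) (by omega) (by omega)
        have h0 : ((3 * k : ℕ) : ZMod (3 * k)) = 0 := ZMod.natCast_self _
        push_cast at this h0
        rw [h0, hz] at this
        apply Qsymm
        simpa using this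
    have Qmix : ∀ y z, Q (some (false, y)) (some (true, z)) := by
      intro y z
      have hlt := ZMod.val_lt (z - y)
      have hz : ((z - y).val : ZMod (3 * k)) = z - y := ZMod.natCast_zmod_val _
      obtain ⟨w, hw⟩ := hmix ((z - y).val : ℤ) (by omega) (by omega)
      have := Qshift _ _ (y - w) hw
      rw [Int.cast_natCast, hz] at this
      simp only [shift, Option.map_some] at this
      convert this using 3
      · ring
      · ring
    intro u v huv
    have hQ : ∀ u v : Pt (3 * k), u ≠ v → Q u v := by
      intro u v huv
      match u, v with
      | none, none => exact absurd rfl huv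
      | none, some (b, y) => exact Qinf b y
      | some (b, y), none => exact Qsymm _ _ (Qinf b y)
      | some (false, y), some (true, z) => exact Qmix y z
      | some (true, y), some (false, z) => exact Qsymm _ _ (Qmix z y)
      | some (true, y), some (true, z) => exact Qpure _ _ _ (fun h => huv (by rw [h]))
      | some (false, y), some (false, z) => exact Qpure _ _ _ (fun h => huv (by rw [h]))
    have := hQ (e.symm u) (e.symm v) (fun h => huv (e.symm.injective h))
    simpa only [Q, Equiv.apply_symm_apply] using this

/-! ### The base class -/

/-- The point `z` on level `b`. -/
def P (n : ℕ) (b : Bool) (z : ℤ) : Pt n := some (b, (z : ZMod n))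

/-- A zigzag `u, v, u + e, v - e, u + 2e, v - 2e, …`. -/
structure Zg where
  b1 : Bool
  u : ℤ
  b2 : Bool
  v : ℤ
  e : ℤ

def Zg.pt (n : ℕ) (Z : Zg) (j : ℕ) : Pt n :=
  if j % 2 = 0 then P n Z.b1 (Z.u + Z.e * (j / 2 : ℕ)) else P n Z.b2 (Z.v - Z.e * (j / 2 : ℕ))

/-- A cycle: zigzag, list, zigzag, list. -/
structure Cy (n : ℕ) where
  Z1 : Zg
  l1 : List (Pt n)
  Z2 : Zg
  l2 : List (Pt n)

def Cy.f {n : ℕ} (C : Cy n) (m j : ℕ) : Pt n :=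
  if j < 2 * m then C.Z1.pt n j
  else if j < 2 * m + C.l1.length then C.l1.getD (j - 2 * m) none
  else if j < 4 * m + C.l1.length then C.Z2.pt n (j - (2 * m + C.l1.length))
  else C.l2.getD (j - (4 * m + C.l1.length)) none

lemma Cy.f_z1 {n m : ℕ} (C : Cy n) (j : ℕ) (h : j < 2 * m) : C.f m j = C.Z1.pt n j := by
  rw [Cy.f, if_pos h]

lemma Cy.f_l1 {n m : ℕ} (C : Cy n) (s : ℕ) (h : s < C.l1.length) :
    C.f m (2 * m + s) = C.l1.getD s none := by
  rw [Cy.f, if_neg (by omega), if_pos (by omega), Nat.add_sub_cancel_left]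

lemma Cy.f_z2 {n m : ℕ} (C : Cy n) (j : ℕ) (h : j < 2 * m) :
    C.f m (2 * m + C.l1.length + j) = C.Z2.pt n j := by
  rw [Cy.f, if_neg (by omega), if_neg (by omega), if_pos (by omega), Nat.add_sub_cancel_left]

lemma Cy.f_l2 {n m : ℕ} (C : Cy n) (s : ℕ) :
    C.f m (4 * m + C.l1.length + s) = C.l2.getD s none := by
  rw [Cy.f, if_neg (by omega), if_neg (by omega), if_neg (by omega), Nat.add_sub_cancel_left]

lemma Zg.pt_even {n : ℕ} (Z : Zg) (s : ℕ) : Z.pt n (2 * s) = P n Z.b1 (Z.u + Z.e * s) := by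
  rw [Zg.pt, if_pos (by omega), Nat.mul_div_cancel_left _ (by norm_num)]

lemma Zg.pt_odd {n : ℕ} (Z : Zg) (s : ℕ) : Z.pt n (2 * s + 1) = P n Z.b2 (Z.v - Z.e * s) := by
  rw [Zg.pt, if_neg (by omega), show (2 * s + 1) / 2 = s by omega]

section base

variable {n m : ℕ} (C : Fin 6 → Cy n)

def fb (m : ℕ) (i : Fin 6) (j : ZMod (4 * m + 7)) : Pt n := (C i).f m j.val

lemma fb_mem (i : Fin 6) (j : ℕ) (hj : j < 4 * m + 7) : ∃ i' j', fb C m i' j' = (C i).f m j := by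
  refine ⟨i, (j : ZMod (4 * m + 7)), ?_⟩
  rw [fb, ZMod.val_natCast, Nat.mod_eq_of_lt hj]

lemma fb_edge (i : Fin 6) (j : ℕ) (hj : j + 1 < 4 * m + 7) :
    Eb (fb C m) ((C i).f m j) ((C i).f m (j + 1)) := by
  refine ⟨i, (j : ZMod (4 * m + 7)), Or.inl ⟨?_, ?_⟩⟩
  · rw [fb, ZMod.val_natCast, Nat.mod_eq_of_lt (by omega)]
  · rw [fb, ← Nat.cast_succ, ZMod.val_natCast, Nat.mod_eq_of_lt (by omega)]

lemma fb_edge_last (i : Fin 6) : Eb (fb C m) ((C i).f m (4 * m + 6)) ((C i).f m 0) := by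
  refine ⟨i, ((4 * m + 6 : ℕ) : ZMod (4 * m + 7)), Or.inl ⟨?_, ?_⟩⟩
  · rw [fb, ZMod.val_natCast, Nat.mod_eq_of_lt (by omega)]
  · rw [fb, ← Nat.cast_succ, ZMod.val_natCast, Nat.mod_self]

/-- All cycles have seven additional vertices. -/
def Good : Prop := ∀ i, (C i).l1.length + (C i).l2.length = 7

variable {C}

lemma mem_l1 (hC : Good C) (i : Fin 6) (s : ℕ) (hs : Nat.ble (s + 1) (C i).l1.length = true) :
    ∃ i' j', fb C m i' j' = (C i).l1.getD s none := by
  have hs := Nat.le_of_ble_eq_true hs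
  have := hC i
  rw [← Cy.f_l1 (m := m) _ _ hs]
  exact fb_mem C i _ (by omega)

lemma mem_l2 (hC : Good C) (i : Fin 6) (s : ℕ) (hs : Nat.ble (s + 1) (C i).l2.length = true) :
    ∃ i' j', fb C m i' j' = (C i).l2.getD s none := by
  have hs := Nat.le_of_ble_eq_true hs
  have := hC i
  rw [← Cy.f_l2 (m := m)]
  exact fb_mem C i _ (by omega)

lemma edge_l1 (hC : Good C) (hm : 1 ≤ m) (i : Fin 6) (s : ℕ)
    (hs : Nat.ble s (C i).l1.length = true) :
    Eb (fb C m)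
      ((P n (C i).Z1.b2 ((C i).Z1.v - (C i).Z1.e * ((m : ℤ) - 1)) :: (C i).l1).getD s none)
      (((C i).l1 ++ [P n (C i).Z2.b1 (C i).Z2.u]).getD s none) := by
  have hs := Nat.le_of_ble_eq_true hs
  have h7 := hC i
  have key := fb_edge (m := m) C i (2 * m - 1 + s) (by omega)
  have h1 : (C i).f m (2 * m - 1 + s) =
      (P n (C i).Z1.b2 ((C i).Z1.v - (C i).Z1.e * ((m : ℤ) - 1)) :: (C i).l1).getD s none := by
    rcases s with _ | s
    · rw [Cy.f_z1 _ _ (by omega), show 2 * m - 1 + 0 = 2 * (m - 1) + 1 by omega, Zg.pt_odd,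
        List.getD_cons_zero, Nat.cast_sub hm, Nat.cast_one]
    · rw [show 2 * m - 1 + (s + 1) = 2 * m + s by omega, Cy.f_l1 _ _ (by omega),
        List.getD_cons_succ]
  have h2 : (C i).f m (2 * m - 1 + s + 1) =
      ((C i).l1 ++ [P n (C i).Z2.b1 (C i).Z2.u]).getD s none := by
    rw [show 2 * m - 1 + s + 1 = 2 * m + s by omega]
    rcases hs.lt_or_eq with h | h
    · rw [Cy.f_l1 _ _ h, List.getD_append _ _ _ _ h]
    · have h0 := Zg.pt_even (n := n) (C i).Z2 0
      have h3 := Cy.f_z2 (m := m) (C i) 0 (by omega)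
      rw [List.getD_append_right _ _ _ _ h.ge, h, Nat.sub_self, List.getD_cons_zero]
      simpa using h3.trans h0
  rw [h1, h2] at key
  exact key

lemma edge_l2 (hC : Good C) (hm : 1 ≤ m) (i : Fin 6) (s : ℕ)
    (hs : Nat.ble s (C i).l2.length = true) :
    Eb (fb C m)
      ((P n (C i).Z2.b2 ((C i).Z2.v - (C i).Z2.e * ((m : ℤ) - 1)) :: (C i).l2).getD s none)
      (((C i).l2 ++ [P n (C i).Z1.b1 (C i).Z1.u]).getD s none) := by
  have hs := Nat.le_of_ble_eq_true hs
  have h7 := hC i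
  have h1 : (C i).f m (4 * m + (C i).l1.length - 1 + s) =
      (P n (C i).Z2.b2 ((C i).Z2.v - (C i).Z2.e * ((m : ℤ) - 1)) :: (C i).l2).getD s none := by
    rcases s with _ | s
    · rw [show 4 * m + (C i).l1.length - 1 + 0 = 2 * m + (C i).l1.length + (2 * (m - 1) + 1) by
        omega, Cy.f_z2 _ _ (by omega), Zg.pt_odd,
        List.getD_cons_zero, Nat.cast_sub hm, Nat.cast_one]
    · rw [show 4 * m + (C i).l1.length - 1 + (s + 1) = 4 * m + (C i).l1.length + s by omega,
        Cy.f_l2, List.getD_cons_succ]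
  rw [← h1]
  rcases hs.lt_or_eq with h | h
  · have key := fb_edge (m := m) C i (4 * m + (C i).l1.length - 1 + s) (by omega)
    rw [List.getD_append _ _ _ _ h, ← Cy.f_l2 (m := m)]
    rwa [show 4 * m + (C i).l1.length - 1 + s + 1 = 4 * m + (C i).l1.length + s by omega] at key
  · have key := fb_edge_last (m := m) C i
    have h0 := Zg.pt_even (n := n) (C i).Z1 0
    have h3 := Cy.f_z1 (m := m) (C i) 0 (by omega)
    rw [List.getD_append_right _ _ _ _ h.ge, h, Nat.sub_self, List.getD_cons_zero]
    rw [show 4 * m + (C i).l1.length - 1 + (C i).l2.length = 4 * m + 6 by omega]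
    have h4 : (C i).f m 0 = P n (C i).Z1.b1 (C i).Z1.u := by simpa using h3.trans h0
    rwa [h4] at key

/-- `Z` occurs as a zigzag. -/
def HasZ (C : Fin 6 → Cy n) (Z : Zg) : Prop := ∃ i, (C i).Z1 = Z ∨ (C i).Z2 = Z

lemma zig_mem (hC : Good C) {Z : Zg} (hZ : HasZ C Z) (j : ℕ) (hj : j < 2 * m) :
    ∃ i' j', fb C m i' j' = Z.pt n j := by
  obtain ⟨i, rfl | rfl⟩ := hZ
  · rw [← Cy.f_z1 _ _ hj]
    exact fb_mem C i _ (by omega)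
  · have := hC i
    rw [← Cy.f_z2 _ _ hj]
    exact fb_mem C i _ (by omega)

lemma zig_edge (hC : Good C) {Z : Zg} (hZ : HasZ C Z) (j : ℕ) (hj : j + 1 < 2 * m) :
    Eb (fb C m) (Z.pt n j) (Z.pt n (j + 1)) := by
  obtain ⟨i, rfl | rfl⟩ := hZ
  · rw [← Cy.f_z1 _ _ hj, ← Cy.f_z1 (m := m) _ j (by omega)]
    exact fb_edge C i _ (by omega)
  · have := hC i
    rw [← Cy.f_z2 _ _ hj, ← Cy.f_z2 (m := m) _ j (by omega)]
    exact fb_edge C i _ (by omega)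

/-- Point `x` of level `b` is covered. -/
def M (C : Fin 6 → Cy n) (m : ℕ) (b : Bool) (x : ℤ) : Prop := ∃ i j, fb C m i j = P n b x

/-- Difference `d` occurs between levels `b` and `b'`. -/
def D (C : Fin 6 → Cy n) (m : ℕ) (b b' : Bool) (d : ℤ) : Prop :=
  ∃ y, Eb (fb C m) (some (b, y)) (some (b', y + (d : ZMod n)))

lemma mkM {b : Bool} {c x : ℤ} (h : M C m b c) (q : ℤ) (hx : x = c + q * n) : M C m b x := by
  obtain ⟨i, j, h⟩ := h
  refine ⟨i, j, h.trans ?_⟩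
  rw [hx, P, P]
  push_cast
  rw [ZMod.natCast_self, mul_zero, add_zero]

lemma mkD {b b' : Bool} {a c d : ℤ} (h : Eb (fb C m) (P n b a) (P n b' c)) (q : ℤ)
    (hd : d = c - a + q * n) : D C m b b' d := by
  refine ⟨(a : ZMod n), ?_⟩
  have : (a : ZMod n) + (d : ZMod n) = (c : ZMod n) := by
    rw [hd]
    push_cast
    rw [ZMod.natCast_self, mul_zero, add_zero, add_sub_cancel]
  rw [this]
  exact h

lemma zM1 (hC : Good C) {b1 b2 : Bool} {u v e : ℤ} (hZ : HasZ C ⟨b1, u, b2, v, e⟩) (s x : ℤ)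
    (h0 : 0 ≤ s) (h1 : s < m) (hx : x = u + e * s) : M C m b1 x := by
  obtain ⟨s, rfl⟩ := Int.eq_ofNat_of_zero_le h0
  have := zig_mem (m := m) hC hZ (2 * s) (by omega)
  rw [Zg.pt_even] at this
  rw [hx]
  exact this

lemma zM2 (hC : Good C) {b1 b2 : Bool} {u v e : ℤ} (hZ : HasZ C ⟨b1, u, b2, v, e⟩) (s x : ℤ)
    (h0 : 0 ≤ s) (h1 : s < m) (hx : x = v - e * s) : M C m b2 x := by
  obtain ⟨s, rfl⟩ := Int.eq_ofNat_of_zero_le h0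
  have := zig_mem (m := m) hC hZ (2 * s + 1) (by omega)
  rw [Zg.pt_odd] at this
  rw [hx]
  exact this

lemma zE (hC : Good C) {b1 b2 : Bool} {u v e : ℤ} (hZ : HasZ C ⟨b1, u, b2, v, e⟩) (r : ℤ)
    (h0 : 0 ≤ r) (h1 : r + 1 < 2 * m) :
    ∃ a c, Eb (fb C m) (P n b1 a) (P n b2 c) ∧ c - a = v - u - e * r := by
  obtain ⟨r, rfl⟩ := Int.eq_ofNat_of_zero_le h0
  have key := zig_edge (m := m) hC hZ r (by omega)
  rcases Nat.even_or_odd' r with ⟨s, rfl | rfl⟩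
  · rw [Zg.pt_even, Zg.pt_odd] at key
    refine ⟨_, _, key, ?_⟩
    push_cast
    ring
  · rw [Zg.pt_odd, show 2 * s + 1 + 1 = 2 * (s + 1) by ring, Zg.pt_even] at key
    refine ⟨_, _, key.symm, ?_⟩
    push_cast
    ring

lemma zD1 (hC : Good C) {b1 b2 : Bool} {u v e : ℤ} (hZ : HasZ C ⟨b1, u, b2, v, e⟩) (q r d : ℤ)
    (h0 : 0 ≤ r) (h1 : r + 1 < 2 * m) (hd : d = v - u - e * r + q * n) : D C m b1 b2 d := by
  obtain ⟨a, c, h, h2⟩ := zE hC hZ r h0 h1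
  exact mkD h q (by rw [hd, h2])

lemma zD2 (hC : Good C) {b1 b2 : Bool} {u v e : ℤ} (hZ : HasZ C ⟨b1, u, b2, v, e⟩) (q r d : ℤ)
    (h0 : 0 ≤ r) (h1 : r + 1 < 2 * m) (hd : d = u - v + e * r + q * n) : D C m b2 b1 d := by
  obtain ⟨a, c, h, h2⟩ := zE hC hZ r h0 h1
  exact mkD h.symm q (by rw [hd]; linear_combination h2)

end base

/-- The six base cycles. -/
def dat (n : ℕ) (m : ℤ) : Fin 6 → Cy n
  | 0 => ⟨⟨false, 8 * m + 13, false, 2 * m + 6, -1⟩,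
      [P n true (m), P n true (3 * m + 2)],
      ⟨true, m + 2, true, 3 * m + 1, 1⟩,
      [none, P n false (2 * m + 5), P n true (6 * m + 7), P n false (4 * m + 8), P n false (2 * m + 4)]⟩
  | 1 => ⟨⟨false, 1, false, 4 * m + 7, 1⟩,
      [P n true (9 * m + 12)],
      ⟨true, 7 * m + 11, false, 5 * m + 9, 1⟩,
      [P n true (10 * m + 16), P n true (-1), P n true (10 * m + 15), P n false (8 * m + 14), P n true (8 * m + 11), P n true (4 * m + 4)]⟩
  | 2 => ⟨⟨false, 12 * m + 20, false, 10 * m + 18, -1⟩,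
      [P n false (m + 3), P n false (9 * m + 16), P n false (3 * m + 6), P n false (7 * m + 13), P n true (5 * m + 5), P n false (3 * m + 7)],
      ⟨true, 3 * m + 3, false, 7 * m + 12, 1⟩,
      [P n true (4 * m + 3)]⟩
  | 3 => ⟨⟨true, 6 * m + 9, true, 12 * m + 19, 1⟩,
      [P n true (7 * m + 9), P n true (11 * m + 19), P n false (m + 2), P n false (11 * m + 18), P n false (5 * m + 10), P n true (11 * m + 18), P n false (5 * m + 11)],
      ⟨false, 5 * m + 13, true, 11 * m + 16, 1⟩,
      []⟩
  | 4 => ⟨⟨true, 9 * m + 11, true, 5 * m + 7, -1⟩,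
      [P n false (8 * m + 15)],
      ⟨false, 8 * m + 16, true, 10 * m + 13, 1⟩,
      [P n false (11 * m + 20), P n true (7 * m + 10), P n false (9 * m + 17), P n true (11 * m + 17), P n false (11 * m + 19), P n false (m + 1)]⟩
  | 5 => ⟨⟨true, m - 1, false, m + 4, -1⟩,
      [P n false (4 * m + 9), P n true (10 * m + 14), P n true (6 * m + 8)],
      ⟨true, 4 * m + 5, false, 10 * m + 17, 1⟩,
      [P n true (5 * m + 6), P n true (m + 1), P n true (9 * m + 13), P n false (5 * m + 12)]⟩

lemma dat_good (n : ℕ) (m : ℤ) : Good (dat n m) := by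
  intro i
  fin_cases i <;> rfl

lemma cover0 (m : ℕ) (hm : 1 ≤ m) (x : ℤ) (h0 : 0 ≤ x) (h1 : x < 12 * m + 21) (hs : x ≠ 0) :
    M (dat (3 * (4 * m + 7)) m) m false x := by
  have dg := dat_good (3 * (4 * m + 7)) m
  rcases le_or_gt x (0) with h | h
  · exact absurd (show x = 0 by omega) hs
  rcases le_or_gt x (m) with h | h
  · exact zM1 (C := dat _ m) dg (⟨1, Or.inl rfl⟩ : HasZ _ ⟨false, 1, false, 4 * m + 7, 1⟩) (x - (1)) x (by omega) (by omega) (by omega)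
  rcases le_or_gt x (m + 1) with h | h
  · exact mkM (c := m + 1) (mem_l2 (m := m) (C := dat _ m) dg 4 5 rfl) (0) (by omega)
  rcases le_or_gt x (m + 2) with h | h
  · exact mkM (c := m + 2) (mem_l1 (m := m) (C := dat _ m) dg 3 2 rfl) (0) (by omega)
  rcases le_or_gt x (m + 3) with h | h
  · exact mkM (c := m + 3) (mem_l1 (m := m) (C := dat _ m) dg 2 0 rfl) (0) (by omega)
  rcases le_or_gt x (2 * m + 3) with h | h
  · exact zM2 (C := dat _ m) dg (⟨5, Or.inl rfl⟩ : HasZ _ ⟨true, m - 1, false, m + 4, -1⟩) (x - (m + 4)) x (by omega) (by omega) (by omega)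
  rcases le_or_gt x (2 * m + 4) with h | h
  · exact mkM (c := 2 * m + 4) (mem_l2 (m := m) (C := dat _ m) dg 0 4 rfl) (0) (by omega)
  rcases le_or_gt x (2 * m + 5) with h | h
  · exact mkM (c := 2 * m + 5) (mem_l2 (m := m) (C := dat _ m) dg 0 1 rfl) (0) (by omega)
  rcases le_or_gt x (3 * m + 5) with h | h
  · exact zM2 (C := dat _ m) dg (⟨0, Or.inl rfl⟩ : HasZ _ ⟨false, 8 * m + 13, false, 2 * m + 6, -1⟩) (x - (2 * m + 6)) x (by omega) (by omega) (by omega)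
  rcases le_or_gt x (3 * m + 6) with h | h
  · exact mkM (c := 3 * m + 6) (mem_l1 (m := m) (C := dat _ m) dg 2 2 rfl) (0) (by omega)
  rcases le_or_gt x (3 * m + 7) with h | h
  · exact mkM (c := 3 * m + 7) (mem_l1 (m := m) (C := dat _ m) dg 2 5 rfl) (0) (by omega)
  rcases le_or_gt x (4 * m + 7) with h | h
  · exact zM2 (C := dat _ m) dg (⟨1, Or.inl rfl⟩ : HasZ _ ⟨false, 1, false, 4 * m + 7, 1⟩) (4 * m + 7 - x) x (by omega) (by omega) (by omega)
  rcases le_or_gt x (4 * m + 8) with h | h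
  · exact mkM (c := 4 * m + 8) (mem_l2 (m := m) (C := dat _ m) dg 0 3 rfl) (0) (by omega)
  rcases le_or_gt x (4 * m + 9) with h | h
  · exact mkM (c := 4 * m + 9) (mem_l1 (m := m) (C := dat _ m) dg 5 0 rfl) (0) (by omega)
  rcases le_or_gt x (5 * m + 9) with h | h
  · exact zM2 (C := dat _ m) dg (⟨1, Or.inr rfl⟩ : HasZ _ ⟨true, 7 * m + 11, false, 5 * m + 9, 1⟩) (5 * m + 9 - x) x (by omega) (by omega) (by omega)
  rcases le_or_gt x (5 * m + 10) with h | h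
  · exact mkM (c := 5 * m + 10) (mem_l1 (m := m) (C := dat _ m) dg 3 4 rfl) (0) (by omega)
  rcases le_or_gt x (5 * m + 11) with h | h
  · exact mkM (c := 5 * m + 11) (mem_l1 (m := m) (C := dat _ m) dg 3 6 rfl) (0) (by omega)
  rcases le_or_gt x (5 * m + 12) with h | h
  · exact mkM (c := 5 * m + 12) (mem_l2 (m := m) (C := dat _ m) dg 5 3 rfl) (0) (by omega)
  rcases le_or_gt x (6 * m + 12) with h | h
  · exact zM1 (C := dat _ m) dg (⟨3, Or.inr rfl⟩ : HasZ _ ⟨false, 5 * m + 13, true, 11 * m + 16, 1⟩) (x - (5 * m + 13)) x (by omega) (by omega) (by omega)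
  rcases le_or_gt x (7 * m + 12) with h | h
  · exact zM2 (C := dat _ m) dg (⟨2, Or.inr rfl⟩ : HasZ _ ⟨true, 3 * m + 3, false, 7 * m + 12, 1⟩) (7 * m + 12 - x) x (by omega) (by omega) (by omega)
  rcases le_or_gt x (7 * m + 13) with h | h
  · exact mkM (c := 7 * m + 13) (mem_l1 (m := m) (C := dat _ m) dg 2 3 rfl) (0) (by omega)
  rcases le_or_gt x (8 * m + 13) with h | h
  · exact zM1 (C := dat _ m) dg (⟨0, Or.inl rfl⟩ : HasZ _ ⟨false, 8 * m + 13, false, 2 * m + 6, -1⟩) (8 * m + 13 - x) x (by omega) (by omega) (by omega)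
  rcases le_or_gt x (8 * m + 14) with h | h
  · exact mkM (c := 8 * m + 14) (mem_l2 (m := m) (C := dat _ m) dg 1 3 rfl) (0) (by omega)
  rcases le_or_gt x (8 * m + 15) with h | h
  · exact mkM (c := 8 * m + 15) (mem_l1 (m := m) (C := dat _ m) dg 4 0 rfl) (0) (by omega)
  rcases le_or_gt x (9 * m + 15) with h | h
  · exact zM1 (C := dat _ m) dg (⟨4, Or.inr rfl⟩ : HasZ _ ⟨false, 8 * m + 16, true, 10 * m + 13, 1⟩) (x - (8 * m + 16)) x (by omega) (by omega) (by omega)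
  rcases le_or_gt x (9 * m + 16) with h | h
  · exact mkM (c := 9 * m + 16) (mem_l1 (m := m) (C := dat _ m) dg 2 1 rfl) (0) (by omega)
  rcases le_or_gt x (9 * m + 17) with h | h
  · exact mkM (c := 9 * m + 17) (mem_l2 (m := m) (C := dat _ m) dg 4 2 rfl) (0) (by omega)
  rcases le_or_gt x (10 * m + 17) with h | h
  · exact zM2 (C := dat _ m) dg (⟨5, Or.inr rfl⟩ : HasZ _ ⟨true, 4 * m + 5, false, 10 * m + 17, 1⟩) (10 * m + 17 - x) x (by omega) (by omega) (by omega)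
  rcases le_or_gt x (11 * m + 17) with h | h
  · exact zM2 (C := dat _ m) dg (⟨2, Or.inl rfl⟩ : HasZ _ ⟨false, 12 * m + 20, false, 10 * m + 18, -1⟩) (x - (10 * m + 18)) x (by omega) (by omega) (by omega)
  rcases le_or_gt x (11 * m + 18) with h | h
  · exact mkM (c := 11 * m + 18) (mem_l1 (m := m) (C := dat _ m) dg 3 3 rfl) (0) (by omega)
  rcases le_or_gt x (11 * m + 19) with h | h
  · exact mkM (c := 11 * m + 19) (mem_l2 (m := m) (C := dat _ m) dg 4 4 rfl) (0) (by omega)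
  rcases le_or_gt x (11 * m + 20) with h | h
  · exact mkM (c := 11 * m + 20) (mem_l2 (m := m) (C := dat _ m) dg 4 0 rfl) (0) (by omega)
  exact zM1 (C := dat _ m) dg (⟨2, Or.inl rfl⟩ : HasZ _ ⟨false, 12 * m + 20, false, 10 * m + 18, -1⟩) (12 * m + 20 - x) x (by omega) (by omega) (by omega)

lemma cover1 (m : ℕ) (hm : 1 ≤ m) (x : ℤ) (h0 : 0 ≤ x) (h1 : x < 12 * m + 21) :
    M (dat (3 * (4 * m + 7)) m) m true x := by
  have dg := dat_good (3 * (4 * m + 7)) m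
  rcases le_or_gt x (m - 1) with h | h
  · exact zM1 (C := dat _ m) dg (⟨5, Or.inl rfl⟩ : HasZ _ ⟨true, m - 1, false, m + 4, -1⟩) (m - 1 - x) x (by omega) (by omega) (by omega)
  rcases le_or_gt x (m) with h | h
  · exact mkM (c := m) (mem_l1 (m := m) (C := dat _ m) dg 0 0 rfl) (0) (by omega)
  rcases le_or_gt x (m + 1) with h | h
  · exact mkM (c := m + 1) (mem_l2 (m := m) (C := dat _ m) dg 5 1 rfl) (0) (by omega)
  rcases le_or_gt x (2 * m + 1) with h | h
  · exact zM1 (C := dat _ m) dg (⟨0, Or.inr rfl⟩ : HasZ _ ⟨true, m + 2, true, 3 * m + 1, 1⟩) (x - (m + 2)) x (by omega) (by omega) (by omega)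
  rcases le_or_gt x (3 * m + 1) with h | h
  · exact zM2 (C := dat _ m) dg (⟨0, Or.inr rfl⟩ : HasZ _ ⟨true, m + 2, true, 3 * m + 1, 1⟩) (3 * m + 1 - x) x (by omega) (by omega) (by omega)
  rcases le_or_gt x (3 * m + 2) with h | h
  · exact mkM (c := 3 * m + 2) (mem_l1 (m := m) (C := dat _ m) dg 0 1 rfl) (0) (by omega)
  rcases le_or_gt x (4 * m + 2) with h | h
  · exact zM1 (C := dat _ m) dg (⟨2, Or.inr rfl⟩ : HasZ _ ⟨true, 3 * m + 3, false, 7 * m + 12, 1⟩) (x - (3 * m + 3)) x (by omega) (by omega) (by omega)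
  rcases le_or_gt x (4 * m + 3) with h | h
  · exact mkM (c := 4 * m + 3) (mem_l2 (m := m) (C := dat _ m) dg 2 0 rfl) (0) (by omega)
  rcases le_or_gt x (4 * m + 4) with h | h
  · exact mkM (c := 4 * m + 4) (mem_l2 (m := m) (C := dat _ m) dg 1 5 rfl) (0) (by omega)
  rcases le_or_gt x (5 * m + 4) with h | h
  · exact zM1 (C := dat _ m) dg (⟨5, Or.inr rfl⟩ : HasZ _ ⟨true, 4 * m + 5, false, 10 * m + 17, 1⟩) (x - (4 * m + 5)) x (by omega) (by omega) (by omega)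
  rcases le_or_gt x (5 * m + 5) with h | h
  · exact mkM (c := 5 * m + 5) (mem_l1 (m := m) (C := dat _ m) dg 2 4 rfl) (0) (by omega)
  rcases le_or_gt x (5 * m + 6) with h | h
  · exact mkM (c := 5 * m + 6) (mem_l2 (m := m) (C := dat _ m) dg 5 0 rfl) (0) (by omega)
  rcases le_or_gt x (6 * m + 6) with h | h
  · exact zM2 (C := dat _ m) dg (⟨4, Or.inl rfl⟩ : HasZ _ ⟨true, 9 * m + 11, true, 5 * m + 7, -1⟩) (x - (5 * m + 7)) x (by omega) (by omega) (by omega)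
  rcases le_or_gt x (6 * m + 7) with h | h
  · exact mkM (c := 6 * m + 7) (mem_l2 (m := m) (C := dat _ m) dg 0 2 rfl) (0) (by omega)
  rcases le_or_gt x (6 * m + 8) with h | h
  · exact mkM (c := 6 * m + 8) (mem_l1 (m := m) (C := dat _ m) dg 5 2 rfl) (0) (by omega)
  rcases le_or_gt x (7 * m + 8) with h | h
  · exact zM1 (C := dat _ m) dg (⟨3, Or.inl rfl⟩ : HasZ _ ⟨true, 6 * m + 9, true, 12 * m + 19, 1⟩) (x - (6 * m + 9)) x (by omega) (by omega) (by omega)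
  rcases le_or_gt x (7 * m + 9) with h | h
  · exact mkM (c := 7 * m + 9) (mem_l1 (m := m) (C := dat _ m) dg 3 0 rfl) (0) (by omega)
  rcases le_or_gt x (7 * m + 10) with h | h
  · exact mkM (c := 7 * m + 10) (mem_l2 (m := m) (C := dat _ m) dg 4 1 rfl) (0) (by omega)
  rcases le_or_gt x (8 * m + 10) with h | h
  · exact zM1 (C := dat _ m) dg (⟨1, Or.inr rfl⟩ : HasZ _ ⟨true, 7 * m + 11, false, 5 * m + 9, 1⟩) (x - (7 * m + 11)) x (by omega) (by omega) (by omega)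
  rcases le_or_gt x (8 * m + 11) with h | h
  · exact mkM (c := 8 * m + 11) (mem_l2 (m := m) (C := dat _ m) dg 1 4 rfl) (0) (by omega)
  rcases le_or_gt x (9 * m + 11) with h | h
  · exact zM1 (C := dat _ m) dg (⟨4, Or.inl rfl⟩ : HasZ _ ⟨true, 9 * m + 11, true, 5 * m + 7, -1⟩) (9 * m + 11 - x) x (by omega) (by omega) (by omega)
  rcases le_or_gt x (9 * m + 12) with h | h
  · exact mkM (c := 9 * m + 12) (mem_l1 (m := m) (C := dat _ m) dg 1 0 rfl) (0) (by omega)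
  rcases le_or_gt x (9 * m + 13) with h | h
  · exact mkM (c := 9 * m + 13) (mem_l2 (m := m) (C := dat _ m) dg 5 2 rfl) (0) (by omega)
  rcases le_or_gt x (10 * m + 13) with h | h
  · exact zM2 (C := dat _ m) dg (⟨4, Or.inr rfl⟩ : HasZ _ ⟨false, 8 * m + 16, true, 10 * m + 13, 1⟩) (10 * m + 13 - x) x (by omega) (by omega) (by omega)
  rcases le_or_gt x (10 * m + 14) with h | h
  · exact mkM (c := 10 * m + 14) (mem_l1 (m := m) (C := dat _ m) dg 5 1 rfl) (0) (by omega)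
  rcases le_or_gt x (10 * m + 15) with h | h
  · exact mkM (c := 10 * m + 15) (mem_l2 (m := m) (C := dat _ m) dg 1 2 rfl) (0) (by omega)
  rcases le_or_gt x (10 * m + 16) with h | h
  · exact mkM (c := 10 * m + 16) (mem_l2 (m := m) (C := dat _ m) dg 1 0 rfl) (0) (by omega)
  rcases le_or_gt x (11 * m + 16) with h | h
  · exact zM2 (C := dat _ m) dg (⟨3, Or.inr rfl⟩ : HasZ _ ⟨false, 5 * m + 13, true, 11 * m + 16, 1⟩) (11 * m + 16 - x) x (by omega) (by omega) (by omega)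
  rcases le_or_gt x (11 * m + 17) with h | h
  · exact mkM (c := 11 * m + 17) (mem_l2 (m := m) (C := dat _ m) dg 4 3 rfl) (0) (by omega)
  rcases le_or_gt x (11 * m + 18) with h | h
  · exact mkM (c := 11 * m + 18) (mem_l1 (m := m) (C := dat _ m) dg 3 5 rfl) (0) (by omega)
  rcases le_or_gt x (11 * m + 19) with h | h
  · exact mkM (c := 11 * m + 19) (mem_l1 (m := m) (C := dat _ m) dg 3 1 rfl) (0) (by omega)
  rcases le_or_gt x (12 * m + 19) with h | h
  · exact zM2 (C := dat _ m) dg (⟨3, Or.inl rfl⟩ : HasZ _ ⟨true, 6 * m + 9, true, 12 * m + 19, 1⟩) (12 * m + 19 - x) x (by omega) (by omega) (by omega)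
  exact mkM (c := -1) (mem_l2 (m := m) (C := dat _ m) dg 1 1 rfl) (1) (by omega)

lemma pure0 (m : ℕ) (hm : 1 ≤ m) (d : ℤ) (h0 : 1 ≤ d) (h1 : d ≤ 6 * m + 10) (hs : d ≠ 3) :
    D (dat (3 * (4 * m + 7)) m) m false false d := by
  have dg := dat_good (3 * (4 * m + 7)) m
  rcases le_or_gt d (1) with h | h
  · exact mkD (a := 8 * m + 15) (c := 8 * m + 16) (edge_l1 (C := dat _ m) dg hm 4 1 rfl) (0) (by omega)
  rcases le_or_gt d (2) with h | h
  · exact mkD (a := 5 * m + 11) (c := 5 * m + 13) (edge_l1 (C := dat _ m) dg hm 3 7 rfl) (0) (by omega)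
  rcases le_or_gt d (3) with h | h
  · exact absurd (show d = 3 by omega) hs
  rcases le_or_gt d (2 * m + 2) with h | h
  · exact zD2 (C := dat _ m) dg (⟨2, Or.inl rfl⟩ : HasZ _ ⟨false, 12 * m + 20, false, 10 * m + 18, -1⟩) (0) (2 * m + 2 - d) d (by omega) (by omega) (by omega)
  rcases le_or_gt d (2 * m + 3) with h | h
  · exact mkD (a := 11 * m + 19) (c := m + 1) (edge_l2 (C := dat _ m) dg hm 4 5 rfl) (1) (by omega)
  rcases le_or_gt d (2 * m + 4) with h | h
  · exact mkD (a := 2 * m + 4) (c := 4 * m + 8) (Eb.symm (edge_l2 (C := dat _ m) dg hm 0 4 rfl)) (0) (by omega)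
  rcases le_or_gt d (2 * m + 5) with h | h
  · exact mkD (a := 11 * m + 18) (c := m + 2) (Eb.symm (edge_l1 (C := dat _ m) dg hm 3 3 rfl)) (1) (by omega)
  rcases le_or_gt d (2 * m + 6) with h | h
  · exact mkD (a := m + 4 - -1 * (m - 1)) (c := 4 * m + 9) (edge_l1 (C := dat _ m) dg hm 5 0 rfl) (0) (by omega)
  rcases le_or_gt d (2 * m + 7) with h | h
  · exact mkD (a := 10 * m + 18 - -1 * (m - 1)) (c := m + 3) (edge_l1 (C := dat _ m) dg hm 2 0 rfl) (1) (by omega)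
  rcases le_or_gt d (4 * m + 6) with h | h
  · exact zD1 (C := dat _ m) dg (⟨1, Or.inl rfl⟩ : HasZ _ ⟨false, 1, false, 4 * m + 7, 1⟩) (0) (4 * m + 6 - d) d (by omega) (by omega) (by omega)
  rcases le_or_gt d (4 * m + 7) with h | h
  · exact mkD (a := 3 * m + 6) (c := 7 * m + 13) (edge_l1 (C := dat _ m) dg hm 2 3 rfl) (0) (by omega)
  rcases le_or_gt d (4 * m + 8) with h | h
  · exact mkD (a := 9 * m + 16) (c := m + 3) (Eb.symm (edge_l1 (C := dat _ m) dg hm 2 1 rfl)) (1) (by omega)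
  rcases le_or_gt d (6 * m + 7) with h | h
  · exact zD2 (C := dat _ m) dg (⟨0, Or.inl rfl⟩ : HasZ _ ⟨false, 8 * m + 13, false, 2 * m + 6, -1⟩) (0) (6 * m + 7 - d) d (by omega) (by omega) (by omega)
  rcases le_or_gt d (6 * m + 8) with h | h
  · exact mkD (a := 5 * m + 10) (c := 11 * m + 18) (Eb.symm (edge_l1 (C := dat _ m) dg hm 3 4 rfl)) (0) (by omega)
  rcases le_or_gt d (6 * m + 9) with h | h
  · exact mkD (a := 2 * m + 4) (c := 8 * m + 13) (edge_l2 (C := dat _ m) dg hm 0 5 rfl) (0) (by omega)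
  exact mkD (a := 3 * m + 6) (c := 9 * m + 16) (Eb.symm (edge_l1 (C := dat _ m) dg hm 2 2 rfl)) (0) (by omega)

lemma pure1 (m : ℕ) (hm : 1 ≤ m) (d : ℤ) (h0 : 1 ≤ d) (h1 : d ≤ 6 * m + 10) :
    D (dat (3 * (4 * m + 7)) m) m true true d := by
  have dg := dat_good (3 * (4 * m + 7)) m
  rcases le_or_gt d (2 * m - 1) with h | h
  · exact zD1 (C := dat _ m) dg (⟨0, Or.inr rfl⟩ : HasZ _ ⟨true, m + 2, true, 3 * m + 1, 1⟩) (0) (2 * m - 1 - d) d (by omega) (by omega) (by omega)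
  rcases le_or_gt d (2 * m) with h | h
  · exact mkD (a := m + 2) (c := 3 * m + 2) (Eb.symm (edge_l1 (C := dat _ m) dg hm 0 2 rfl)) (0) (by omega)
  rcases le_or_gt d (2 * m + 1) with h | h
  · exact mkD (a := 7 * m + 11) (c := 9 * m + 12) (Eb.symm (edge_l1 (C := dat _ m) dg hm 1 1 rfl)) (0) (by omega)
  rcases le_or_gt d (2 * m + 2) with h | h
  · exact mkD (a := m) (c := 3 * m + 2) (edge_l1 (C := dat _ m) dg hm 0 1 rfl) (0) (by omega)
  rcases le_or_gt d (2 * m + 3) with h | h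
  · exact mkD (a := 4 * m + 5) (c := 6 * m + 8) (Eb.symm (edge_l1 (C := dat _ m) dg hm 5 3 rfl)) (0) (by omega)
  rcases le_or_gt d (2 * m + 4) with h | h
  · exact mkD (a := 10 * m + 16) (c := -1) (edge_l2 (C := dat _ m) dg hm 1 1 rfl) (1) (by omega)
  rcases le_or_gt d (2 * m + 5) with h | h
  · exact mkD (a := 10 * m + 15) (c := -1) (Eb.symm (edge_l2 (C := dat _ m) dg hm 1 2 rfl)) (1) (by omega)
  rcases le_or_gt d (4 * m + 4) with h | h
  · exact zD2 (C := dat _ m) dg (⟨4, Or.inl rfl⟩ : HasZ _ ⟨true, 9 * m + 11, true, 5 * m + 7, -1⟩) (0) (4 * m + 4 - d) d (by omega) (by omega) (by omega)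
  rcases le_or_gt d (4 * m + 5) with h | h
  · exact mkD (a := m + 1) (c := 5 * m + 6) (Eb.symm (edge_l2 (C := dat _ m) dg hm 5 1 rfl)) (0) (by omega)
  rcases le_or_gt d (4 * m + 6) with h | h
  · exact mkD (a := 6 * m + 8) (c := 10 * m + 14) (Eb.symm (edge_l1 (C := dat _ m) dg hm 5 2 rfl)) (0) (by omega)
  rcases le_or_gt d (4 * m + 7) with h | h
  · exact mkD (a := 4 * m + 4) (c := 8 * m + 11) (Eb.symm (edge_l2 (C := dat _ m) dg hm 1 5 rfl)) (0) (by omega)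
  rcases le_or_gt d (4 * m + 8) with h | h
  · exact mkD (a := 6 * m + 9) (c := 11 * m + 16 - 1 * (m - 1)) (Eb.symm (edge_l2 (C := dat _ m) dg hm 3 0 rfl)) (0) (by omega)
  rcases le_or_gt d (4 * m + 9) with h | h
  · exact mkD (a := 9 * m + 13) (c := m + 1) (Eb.symm (edge_l2 (C := dat _ m) dg hm 5 2 rfl)) (1) (by omega)
  rcases le_or_gt d (4 * m + 10) with h | h
  · exact mkD (a := 7 * m + 9) (c := 11 * m + 19) (edge_l1 (C := dat _ m) dg hm 3 1 rfl) (0) (by omega)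
  rcases le_or_gt d (4 * m + 11) with h | h
  · exact mkD (a := 7 * m + 9) (c := 12 * m + 19 - 1 * (m - 1)) (Eb.symm (edge_l1 (C := dat _ m) dg hm 3 0 rfl)) (0) (by omega)
  exact zD1 (C := dat _ m) dg (⟨3, Or.inl rfl⟩ : HasZ _ ⟨true, 6 * m + 9, true, 12 * m + 19, 1⟩) (0) (6 * m + 10 - d) d (by omega) (by omega) (by omega)

lemma mixed (m : ℕ) (hm : 1 ≤ m) (d : ℤ) (h0 : -4 ≤ d) (h1 : d < 12 * m + 17) :
    D (dat (3 * (4 * m + 7)) m) m false true d := by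
  have dg := dat_good (3 * (4 * m + 7)) m
  rcases le_or_gt d (-4) with h | h
  · exact mkD (a := 3 * m + 7) (c := 3 * m + 3) (edge_l1 (C := dat _ m) dg hm 2 6 rfl) (0) (by omega)
  rcases le_or_gt d (-3) with h | h
  · exact mkD (a := 8 * m + 14) (c := 8 * m + 11) (edge_l2 (C := dat _ m) dg hm 1 4 rfl) (0) (by omega)
  rcases le_or_gt d (-2) with h | h
  · exact mkD (a := 11 * m + 19) (c := 11 * m + 17) (Eb.symm (edge_l2 (C := dat _ m) dg hm 4 4 rfl)) (0) (by omega)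
  rcases le_or_gt d (2 * m - 3) with h | h
  · exact zD1 (C := dat _ m) dg (⟨4, Or.inr rfl⟩ : HasZ _ ⟨false, 8 * m + 16, true, 10 * m + 13, 1⟩) (0) (2 * m - 3 - d) d (by omega) (by omega) (by omega)
  rcases le_or_gt d (2 * m - 2) with h | h
  · exact mkD (a := 3 * m + 7) (c := 5 * m + 5) (Eb.symm (edge_l1 (C := dat _ m) dg hm 2 5 rfl)) (0) (by omega)
  rcases le_or_gt d (2 * m - 1) with h | h
  · exact mkD (a := 4 * m + 8) (c := 6 * m + 7) (Eb.symm (edge_l2 (C := dat _ m) dg hm 0 3 rfl)) (0) (by omega)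
  rcases le_or_gt d (2 * m) with h | h
  · exact mkD (a := 9 * m + 17) (c := 11 * m + 17) (edge_l2 (C := dat _ m) dg hm 4 3 rfl) (0) (by omega)
  rcases le_or_gt d (2 * m + 1) with h | h
  · exact mkD (a := 8 * m + 14) (c := 10 * m + 15) (Eb.symm (edge_l2 (C := dat _ m) dg hm 1 3 rfl)) (0) (by omega)
  rcases le_or_gt d (4 * m) with h | h
  · exact zD2 (C := dat _ m) dg (⟨1, Or.inr rfl⟩ : HasZ _ ⟨true, 7 * m + 11, false, 5 * m + 9, 1⟩) (0) (d - (2 * m + 2)) d (by omega) (by omega) (by omega)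
  rcases le_or_gt d (4 * m + 1) with h | h
  · exact mkD (a := 5 * m + 12) (c := 9 * m + 13) (Eb.symm (edge_l2 (C := dat _ m) dg hm 5 3 rfl)) (0) (by omega)
  rcases le_or_gt d (4 * m + 2) with h | h
  · exact mkD (a := 2 * m + 5) (c := 6 * m + 7) (edge_l2 (C := dat _ m) dg hm 0 2 rfl) (0) (by omega)
  rcases le_or_gt d (4 * m + 3) with h | h
  · exact mkD (a := 1) (c := 4 * m + 4) (Eb.symm (edge_l2 (C := dat _ m) dg hm 1 6 rfl)) (0) (by omega)
  rcases le_or_gt d (4 * m + 4) with h | h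
  · exact mkD (a := 12 * m + 20) (c := 4 * m + 3) (Eb.symm (edge_l2 (C := dat _ m) dg hm 2 1 rfl)) (1) (by omega)
  rcases le_or_gt d (6 * m + 3) with h | h
  · exact zD1 (C := dat _ m) dg (⟨3, Or.inr rfl⟩ : HasZ _ ⟨false, 5 * m + 13, true, 11 * m + 16, 1⟩) (0) (6 * m + 3 - d) d (by omega) (by omega) (by omega)
  rcases le_or_gt d (6 * m + 4) with h | h
  · exact mkD (a := 4 * m + 7 - 1 * (m - 1)) (c := 9 * m + 12) (edge_l1 (C := dat _ m) dg hm 1 0 rfl) (0) (by omega)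
  rcases le_or_gt d (6 * m + 5) with h | h
  · exact mkD (a := 4 * m + 9) (c := 10 * m + 14) (edge_l1 (C := dat _ m) dg hm 5 1 rfl) (0) (by omega)
  rcases le_or_gt d (6 * m + 6) with h | h
  · exact mkD (a := 5 * m + 9 - 1 * (m - 1)) (c := 10 * m + 16) (edge_l2 (C := dat _ m) dg hm 1 0 rfl) (0) (by omega)
  rcases le_or_gt d (6 * m + 7) with h | h
  · exact mkD (a := 5 * m + 11) (c := 11 * m + 18) (Eb.symm (edge_l1 (C := dat _ m) dg hm 3 6 rfl)) (0) (by omega)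
  rcases le_or_gt d (6 * m + 8) with h | h
  · exact mkD (a := 5 * m + 10) (c := 11 * m + 18) (edge_l1 (C := dat _ m) dg hm 3 5 rfl) (0) (by omega)
  rcases le_or_gt d (8 * m + 7) with h | h
  · exact zD2 (C := dat _ m) dg (⟨5, Or.inr rfl⟩ : HasZ _ ⟨true, 4 * m + 5, false, 10 * m + 17, 1⟩) (1) (d - (6 * m + 9)) d (by omega) (by omega) (by omega)
  rcases le_or_gt d (8 * m + 8) with h | h
  · exact mkD (a := 5 * m + 12) (c := m - 1) (edge_l2 (C := dat _ m) dg hm 5 4 rfl) (1) (by omega)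
  rcases le_or_gt d (8 * m + 9) with h | h
  · exact mkD (a := 10 * m + 17 - 1 * (m - 1)) (c := 5 * m + 6) (edge_l2 (C := dat _ m) dg hm 5 0 rfl) (1) (by omega)
  rcases le_or_gt d (8 * m + 10) with h | h
  · exact mkD (a := m + 1) (c := 9 * m + 11) (edge_l2 (C := dat _ m) dg hm 4 6 rfl) (0) (by omega)
  rcases le_or_gt d (8 * m + 11) with h | h
  · exact mkD (a := 11 * m + 20) (c := 7 * m + 10) (edge_l2 (C := dat _ m) dg hm 4 1 rfl) (1) (by omega)
  rcases le_or_gt d (10 * m + 10) with h | h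
  · exact zD2 (C := dat _ m) dg (⟨2, Or.inr rfl⟩ : HasZ _ ⟨true, 3 * m + 3, false, 7 * m + 12, 1⟩) (1) (d - (8 * m + 12)) d (by omega) (by omega) (by omega)
  rcases le_or_gt d (10 * m + 11) with h | h
  · exact mkD (a := 7 * m + 12 - 1 * (m - 1)) (c := 4 * m + 3) (edge_l2 (C := dat _ m) dg hm 2 0 rfl) (1) (by omega)
  rcases le_or_gt d (10 * m + 12) with h | h
  · exact mkD (a := 8 * m + 15) (c := 5 * m + 7 - -1 * (m - 1)) (Eb.symm (edge_l1 (C := dat _ m) dg hm 4 0 rfl)) (1) (by omega)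
  rcases le_or_gt d (10 * m + 13) with h | h
  · exact mkD (a := 7 * m + 13) (c := 5 * m + 5) (edge_l1 (C := dat _ m) dg hm 2 4 rfl) (1) (by omega)
  rcases le_or_gt d (10 * m + 14) with h | h
  · exact mkD (a := 9 * m + 17) (c := 7 * m + 10) (Eb.symm (edge_l2 (C := dat _ m) dg hm 4 2 rfl)) (1) (by omega)
  rcases le_or_gt d (10 * m + 15) with h | h
  · exact mkD (a := 11 * m + 20) (c := 10 * m + 13 - 1 * (m - 1)) (Eb.symm (edge_l2 (C := dat _ m) dg hm 4 0 rfl)) (1) (by omega)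
  rcases le_or_gt d (10 * m + 16) with h | h
  · exact mkD (a := 2 * m + 6 - -1 * (m - 1)) (c := m) (edge_l1 (C := dat _ m) dg hm 0 0 rfl) (1) (by omega)
  rcases le_or_gt d (10 * m + 17) with h | h
  · exact mkD (a := m + 2) (c := 11 * m + 19) (Eb.symm (edge_l1 (C := dat _ m) dg hm 3 2 rfl)) (0) (by omega)
  exact zD2 (C := dat _ m) dg (⟨5, Or.inl rfl⟩ : HasZ _ ⟨true, m - 1, false, m + 4, -1⟩) (1) (12 * m + 16 - d) d (by omega) (by omega) (by omega)

lemma inf_mem (m : ℕ) : ∃ i j, fb (dat (3 * (4 * m + 7)) m) m i j = none := by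
  have dg := dat_good (3 * (4 * m + 7)) m
  exact mem_l2 (m := m) (C := dat _ m) dg 0 0 rfl

lemma inf_edge (m : ℕ) (hm : 1 ≤ m) (b : Bool) :
    ∃ y, Eb (fb (dat (3 * (4 * m + 7)) m) m) none (some (b, y)) := by
  have dg := dat_good (3 * (4 * m + 7)) m
  cases b
  · exact ⟨_, edge_l2 (C := dat _ m) dg hm 0 1 rfl⟩
  · exact ⟨_, (edge_l2 (C := dat _ m) dg hm 0 0 rfl).symm⟩

theorem stmt7 (k : ℕ) (h11 : 11 ≤ k) (hk : k % 4 = 3) : IsARCS k (6 * k + 1) := by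
  obtain ⟨m, rfl⟩ : ∃ m, k = 4 * m + 7 := ⟨(k - 7) / 4, by omega⟩
  have hm : 1 ≤ m := by omega
  have : NeZero (3 * (4 * m + 7)) := ⟨by omega⟩
  refine arcs_of_base (by omega) (by omega) (fb (dat (3 * (4 * m + 7)) m) m) ?_ ?_ ?_ ?_
  · rintro (_ | ⟨b, y⟩) hw
    · exact inf_mem m
    · have hlt := ZMod.val_lt y
      have hP : P (3 * (4 * m + 7)) b (y.val : ℤ) = some (b, y) := by
        rw [P, Int.cast_natCast, ZMod.natCast_zmod_val]
      rw [← hP]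
      cases b
      · refine cover0 m hm _ (by omega) (by omega) ?_
        intro h
        apply hw
        have h2 : y.val = 0 := by exact_mod_cast h
        rw [(ZMod.val_eq_zero y).1 h2]
      · exact cover1 m hm _ (by omega) (by omega)
  · exact inf_edge m hm
  · intro b d h1 h2 h3
    cases b
    · exact pure0 m hm d h1 (by push_cast at h2; omega) (h3 rfl)
    · exact pure1 m hm d h1 (by push_cast at h2; omega)
  · intro d h1 h2
    push_cast at h2
    rcases lt_or_ge d (12 * m + 17) with h | h
    · exact mixed m hm d (by omega) h
    · obtain ⟨y, hy⟩ := mixed m hm (d - (3 * (4 * m + 7) : ℕ)) (by push_cast; omega)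
        (by push_cast; omega)
      rw [Int.cast_sub, Int.cast_natCast, ZMod.natCast_self, sub_zero] at hy
      exact ⟨y, hy⟩
end
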